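/- arXiv:1605.00773 — 3 statements merged into one kernel-verified Lean document; each statement's English description precedes it below -/
import Mathlib

section
/- There exists n_0 such that for every n ≥ n_0, every 3-graph H on n vertices with minimum vertex degree δ(H) ≥ 0.8·C(n−1,2) contains a tight Hamiltonian cycle. -/
open Finset

/-- A tight Hamiltonian cycle in a 3-graph `H` on the vertex set `Fin n`:
a cyclic ordering of all `n` vertices in which every three cyclically
consecutive vertices form an edge of `H`. -/
def HasTightHamCycle (n : ℕ) (H : Finset (Finset (Fin n))) : Prop :=
  ∃ f : ZMod n → Fin n, Function.Bijective f ∧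
    ∀ i : ZMod n, ({f i, f (i + 1), f (i + 2)} : Finset (Fin n)) ∈ H

/-!
The proof is by absorption. Call a pair of vertices linkable if it lies in at least `0.28 n` edges;
any two linkable pairs are then connected by `Ω(n ^ 16)` tight paths of bounded length. Every vertex
`v` has `Ω(n ^ 25)` absorbers, short tight paths that can swallow `v` without changing their ends,
so a greedy choice yields a small family of disjoint absorbers in which every vertex has linearly
many, and it is linked up into one absorbing path. A second small set, the reservoir, robustly
contains links between any two linkable pairs.

A largest family of disjoint tight paths of bounded length covers almost all remaining vertices.
Otherwise cut the vertices outside it into sets of the same length: averaging gives fifty of these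
paths and sets that can be exchanged for fifty-one paths, each woven from a long path in a link
graph and from uncovered vertices sharing that link. Linking all paths and the absorbing path
through the reservoir closes a tight cycle, which then absorbs the vertices left over.
-/

namespace TightCycle

noncomputable section

attribute [local instance high] Classical.propDecidable

section Counting

theorem card_filter_le_add {α : Type*} {s : Finset α} {P Q R : α → Prop}
    (hPQR : ∀ x ∈ s, P x → Q x ∨ R x) : #{x ∈ s | P x} ≤ #{x ∈ s | Q x} + #{x ∈ s | R x} := by
  refine (card_le_card fun x hx => ?_).trans (card_union_le _ _)
  rw [mem_filter] at hx
  simpa only [mem_union, mem_filter, hx.1, true_and] using hPQR x hx.1 hx.2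

theorem card_filter_product {α β : Type*} (S : Finset α) (T : Finset β) (P : α → β → Prop) :
    #{p ∈ S ×ˢ T | P p.1 p.2} = ∑ x ∈ S, #{y ∈ T | P x y} := by
  simp only [card_filter, sum_product]

theorem card_filter_and_product {α β : Type*} (S : Finset α) (T : Finset β) (P : α → Prop)
    (Q : β → Prop) :
    #{p ∈ S ×ˢ T | P p.1 ∧ Q p.2} = #{x ∈ S | P x} * #{y ∈ T | Q y} := by
  rw [← card_product]
  congr 1
  ext p
  simp only [mem_filter, mem_product]
  tauto

theorem card_mul_le_card_filter_product {α β : Type*} (S : Finset α) (T : Finset β)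
    {P : α → β → Prop} {t : ℝ} (ht : ∀ x ∈ S, t ≤ #{y ∈ T | P x y}) :
    #S * t ≤ #{p ∈ S ×ˢ T | P p.1 p.2} := by
  rw [card_filter_product, Nat.cast_sum, ← nsmul_eq_mul]
  exact card_nsmul_le_sum S _ t ht

end Counting

section Tight

variable {V : Type*} {E : V → V → V → Prop}

/-- A 3-graph, encoded as a symmetric ternary relation on its vertices all of whose triples consist
of distinct vertices. -/
structure IsThreeGraph (E : V → V → V → Prop) : Prop where
  swap_left : ∀ {a b c}, E a b c → E b a c
  swap_right : ∀ {a b c}, E a b c → E a c b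
  ne : ∀ {a b c}, E a b c → a ≠ b

theorem IsThreeGraph.reverse (h : IsThreeGraph E) {a b c : V} (habc : E a b c) : E c b a :=
  h.swap_left (h.swap_right (h.swap_left habc))

/-- A list is tight if any three consecutive entries form an edge; a tight list without repetitions
is a tight path. -/
def Tight (E : V → V → V → Prop) : List V → Prop
  | a :: b :: c :: l => E a b c ∧ Tight E (b :: c :: l)
  | _ => True

theorem Tight.tail {a : V} {l : List V} (h : Tight E (a :: l)) : Tight E l :=
  match l with
  | [] => trivial
  | [_] => trivial
  | _ :: _ :: _ => h.2

theorem Tight.glue {l r : List V} {c d : V} (hl : Tight E (l ++ [c, d]))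
    (hr : Tight E (c :: d :: r)) : Tight E (l ++ c :: d :: r) := by
  induction l with
  | nil => exact hr
  | cons a l ih =>
    have htail := ih hl.tail
    match l with
    | [] => exact ⟨hl.1, htail⟩
    | [_] => exact ⟨hl.1, htail⟩
    | _ :: _ :: _ => exact ⟨hl.1, htail⟩

theorem IsThreeGraph.tight_reverse (h : IsThreeGraph E) {l : List V} (hl : Tight E l) :
    Tight E l.reverse := by
  induction l with
  | nil => trivial
  | cons a l ih =>
    match l with
    | [] => trivial
    | [_] => trivial
    | b :: c :: l =>
      have hrev := ih hl.2
      simp only [List.reverse_cons, List.append_assoc, List.cons_append, List.nil_append]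
        at hrev ⊢
      exact hrev.glue ⟨h.reverse hl.1, trivial⟩

end Tight

section Lists

variable {V : Type*} [Fintype V]

/-- The lists of length `k` over `V`, the sample space of all counting arguments below. -/
def lists (V : Type*) [Fintype V] (k : ℕ) : Finset (List V) :=
  (List.finite_length_eq V k).toFinset

theorem mem_lists {k : ℕ} {l : List V} : l ∈ lists V k ↔ l.length = k := by
  simp [lists]

theorem card_filter_lists_succ (k : ℕ) (P : List V → Prop) :
    #{l ∈ lists V (k + 1) | P l} = ∑ x, #{l ∈ lists V k | P (x :: l)} := by
  have cons_decomposition : {l ∈ lists V (k + 1) | P l} =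
      univ.biUnion fun x => {l ∈ lists V k | P (x :: l)}.image (List.cons x) := by
    ext l
    cases l <;> simp [mem_lists]
  rw [cons_decomposition, card_biUnion]
  · simp only [card_image_of_injective _ List.cons_injective]
  · intro x _ y _ hxy
    simp only [Function.onFun, disjoint_left, mem_image]
    rintro _ ⟨l, _, rfl⟩ ⟨l', _, hl'⟩
    exact hxy (List.cons_eq_cons.1 hl').1.symm

theorem card_lists (k : ℕ) : #(lists V k) = Fintype.card V ^ k := by
  induction k with
  | zero => simp [lists]
  | succ k ih =>
    have hsum := card_filter_lists_succ (V := V) k fun _ => True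
    simp only [filter_true] at hsum
    rw [hsum, sum_const, ih, card_univ, smul_eq_mul, pow_succ']

end Lists

section Codegree

variable {V : Type*} [Fintype V] {E : V → V → V → Prop}

/-- A 3-graph with minimum degree at least `0.7999 · n² / 2`. Degrees are counted by ordered pairs,
which accounts for the factor two. -/
structure IsDense (E : V → V → V → Prop) : Prop extends IsThreeGraph E where
  degree : ∀ v, 0.7999 * (Fintype.card V : ℝ) ^ 2 ≤ #{p : V × V | E v p.1 p.2}

/-- The number of edges containing the pair `a`, `b`. -/
def codegree (E : V → V → V → Prop) (a b : V) : ℕ := #{c | E a b c}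

/-- A pair of codegree at least `0.28 n`. The constant exceeds the smaller root of
`q * (1 - q) = 0.2001`, which is what makes codegrees grow along tight paths. -/
def Linkable (E : V → V → V → Prop) (a b : V) : Prop :=
  0.28 * (Fintype.card V : ℝ) ≤ codegree E a b

/-- A pair from which a tight path can be continued greedily for `j` steps, with linearly many
choices at each step, to end in a pair of codegree at least `0.64 n`. -/
def Extendable (E : V → V → V → Prop) : ℕ → V → V → Prop
  | 0, a, b => 0.64 * (Fintype.card V : ℝ) ≤ codegree E a b
  | j + 1, a, b => 0.0001 * (Fintype.card V : ℝ) ≤ #{c | E a b c ∧ Extendable E j b c}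

theorem natCast_card_pos (v : V) : (0 : ℝ) < Fintype.card V :=
  Nat.cast_pos.2 (Fintype.card_pos_iff.2 ⟨v⟩)

theorem IsThreeGraph.codegree_comm (h : IsThreeGraph E) (a b : V) :
    codegree E a b = codegree E b a :=
  congrArg card <| filter_congr fun _ _ => ⟨h.swap_left, h.swap_left⟩

theorem IsThreeGraph.linkable_symm (h : IsThreeGraph E) {a b : V} (hab : Linkable E a b) :
    Linkable E b a := by
  rwa [Linkable, h.codegree_comm]

theorem sum_codegree (v : V) : ∑ b, codegree E v b = #{p : V × V | E v p.1 p.2} := by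
  rw [← univ_product_univ, card_filter_product univ univ (E v)]
  rfl

theorem codegree_le_card (a b : V) : (codegree E a b : ℝ) ≤ Fintype.card V :=
  Nat.cast_le.2 (card_le_univ _)

theorem IsDense.card_codegree_lt_le (h : IsDense E) (v : V) (q : ℝ) :
    (1 - q) * #{b | (codegree E v b : ℝ) < q * Fintype.card V} ≤ 0.2001 * Fintype.card V := by
  set n : ℝ := (Fintype.card V : ℝ) with hn
  set k : ℝ := (#{b | (codegree E v b : ℝ) < q * n} : ℝ) with hk
  have degree_bound : 0.7999 * n ^ 2 ≤ n * n - (1 - q) * n * k :=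
    calc 0.7999 * n ^ 2 ≤ ∑ b, (codegree E v b : ℝ) := by
          rw [← Nat.cast_sum, sum_codegree]
          exact h.degree v
      _ ≤ ∑ b, (n - if (codegree E v b : ℝ) < q * n then (1 - q) * n else 0) := by
          gcongr with b
          split_ifs with hb
          · linarith
          · linarith [codegree_le_card (E := E) v b]
      _ = n * n - (1 - q) * n * k := by
          rw [sum_sub_distrib, ← sum_filter]
          simp only [sum_const, card_univ, nsmul_eq_mul, ← hn, ← hk]
          ring
  refine le_of_mul_le_mul_right ?_ (natCast_card_pos v)
  linarith

theorem IsDense.card_not_linkable_le (h : IsDense E) (v : V) :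
    (#{b | ¬ Linkable E v b} : ℝ) ≤ 0.278 * Fintype.card V := by
  have hlow := h.card_codegree_lt_le v 0.28
  simp only [Linkable, not_le]
  linarith [natCast_card_pos v]

-- At most `0.2001 / (1 - q) · n` vertices `c` give a pair `b`, `c` of codegree below `q n`.
theorem IsDense.extendable_succ (h : IsDense E) {j : ℕ} {q q' : ℝ} (hq : q < 1)
    (hj : ∀ a b, q * Fintype.card V ≤ codegree E a b → Extendable E j a b)
    (hqq' : 0.2001 ≤ (1 - q) * (q' - 0.0001)) (a b : V)
    (hab : q' * Fintype.card V ≤ codegree E a b) : Extendable E (j + 1) a b := by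
  have hcodegree : (codegree E a b : ℝ) ≤ #{c | E a b c ∧ Extendable E j b c} +
      #{c | (codegree E b c : ℝ) < q * Fintype.card V} := by
    rw [codegree]
    norm_cast
    refine card_filter_le_add fun c _ hc => ?_
    exact (lt_or_ge _ _).symm.imp_left fun hbc => ⟨hc, hj _ _ hbc⟩
  have hlow : (#{c | (codegree E b c : ℝ) < q * Fintype.card V} : ℝ) ≤
      (q' - 0.0001) * Fintype.card V := by
    refine le_of_mul_le_mul_left ?_ (sub_pos.2 hq)
    calc _ ≤ 0.2001 * (Fintype.card V : ℝ) := h.card_codegree_lt_le b q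
      _ ≤ (1 - q) * (q' - 0.0001) * Fintype.card V := by gcongr
      _ = _ := mul_assoc _ _ _
  rw [Extendable]
  linarith

theorem IsDense.extendable_of_linkable (h : IsDense E) {a b : V} (hab : Linkable E a b) :
    Extendable E 7 a b := by
  have ext₀ : ∀ a b, (0.64 : ℝ) * Fintype.card V ≤ codegree E a b → Extendable E 0 a b :=
    fun _ _ => id
  have ext₁ := h.extendable_succ (q' := 0.556) (by norm_num) ext₀ (by norm_num)
  have ext₂ := h.extendable_succ (q' := 0.451) (by norm_num) ext₁ (by norm_num)
  have ext₃ := h.extendable_succ (q' := 0.3649) (by norm_num) ext₂ (by norm_num)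
  have ext₄ := h.extendable_succ (q' := 0.3153) (by norm_num) ext₃ (by norm_num)
  have ext₅ := h.extendable_succ (q' := 0.2925) (by norm_num) ext₄ (by norm_num)
  have ext₆ := h.extendable_succ (q' := 0.283) (by norm_num) ext₅ (by norm_num)
  exact h.extendable_succ (by norm_num) ext₆ (by norm_num) a b hab

theorem IsDense.card_not_edge_le (h : IsDense E) (v : V) (X Y : Finset V) :
    (#{p ∈ X ×ˢ Y | ¬ E v p.1 p.2} : ℝ) ≤ 0.2001 * (Fintype.card V : ℝ) ^ 2 := by
  have hmono : #{p ∈ X ×ˢ Y | ¬ E v p.1 p.2} ≤ #{p : V × V | ¬ E v p.1 p.2} :=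
    card_le_card (filter_subset_filter _ (subset_univ _))
  have hcompl := card_filter_add_card_filter_not (s := (univ : Finset (V × V)))
    fun p => E v p.1 p.2
  rw [card_univ, Fintype.card_prod] at hcompl
  rify at hmono hcompl
  linarith [h.degree v]

end Codegree

section Links

variable {V : Type*} [Fintype V] {E : V → V → V → Prop}

/-- The lists of `M` interior vertices that link the pair `a b` to the pair `c d`. -/
def links (E : V → V → V → Prop) (M : ℕ) (a b c d : V) : Finset (List V) :=
  {y ∈ lists V M | Tight E (a :: b :: (y ++ [c, d]))}

theorem IsThreeGraph.card_links_reverse_le (h : IsThreeGraph E) (M : ℕ) (a b c d : V) :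
    #(links E M a b c d) ≤ #(links E M d c b a) := by
  refine card_le_card_of_injOn List.reverse (fun y hy => ?_) List.reverse_injective.injOn
  simp only [links, coe_filter, Set.mem_ofPred_eq, mem_lists] at hy ⊢
  exact ⟨by simpa using hy.1, by simpa using h.tight_reverse hy.2⟩

theorem card_links_succ_ge {M j : ℕ} {κ : ℝ} (hκ : 0 ≤ κ) {c d : V}
    (hj : ∀ a b, Extendable E j a b → κ * (Fintype.card V : ℝ) ^ M ≤ #(links E M a b c d))
    (a b : V) (hab : Extendable E (j + 1) a b) :
    κ * 0.0001 * (Fintype.card V : ℝ) ^ (M + 1) ≤ #(links E (M + 1) a b c d) := by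
  set n : ℝ := (Fintype.card V : ℝ)
  calc κ * 0.0001 * n ^ (M + 1) = 0.0001 * n * (κ * n ^ M) := by ring
    _ ≤ #{x | E a b x ∧ Extendable E j b x} * (κ * n ^ M) :=
        mul_le_mul_of_nonneg_right hab (by positivity)
    _ = ∑ x with E a b x ∧ Extendable E j b x, κ * n ^ M := by rw [sum_const, nsmul_eq_mul]
    _ ≤ ∑ x with E a b x ∧ Extendable E j b x,
          (#{l ∈ lists V M | Tight E (a :: b :: (x :: l ++ [c, d]))} : ℝ) := by
        refine sum_le_sum fun x hx => ?_
        obtain ⟨habx, hext⟩ := (mem_filter.1 hx).2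
        refine (hj b x hext).trans (Nat.cast_le.2 (card_le_card ?_))
        exact monotone_filter_right _ fun l _ hl => ⟨habx, hl⟩
    _ ≤ ∑ x, (#{l ∈ lists V M | Tight E (a :: b :: (x :: l ++ [c, d]))} : ℝ) :=
        sum_le_univ_sum_of_nonneg fun _ => Nat.cast_nonneg _
    _ = #(links E (M + 1) a b c d) := by
        rw [links, card_filter_lists_succ, Nat.cast_sum]

theorem card_links_add_ge {M : ℕ} {κ : ℝ} (hκ : 0 ≤ κ) {c d : V}
    (h₀ : ∀ a b, Extendable E 0 a b → κ * (Fintype.card V : ℝ) ^ M ≤ #(links E M a b c d))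
    (j : ℕ) : ∀ a b, Extendable E j a b →
      κ * 0.0001 ^ j * (Fintype.card V : ℝ) ^ (M + j) ≤ #(links E (M + j) a b c d) := by
  induction j with
  | zero => simpa using h₀
  | succ j ih =>
    rw [pow_succ (0.0001 : ℝ), ← mul_assoc]
    exact card_links_succ_ge (by positivity) ih

theorem IsThreeGraph.card_common_edges_le_card_links_two (h : IsThreeGraph E) (a b c d : V) :
    #{p ∈ ({x | E a b x} : Finset V) ×ˢ ({y | E d c y} : Finset V) |
      E b p.1 p.2 ∧ E c p.1 p.2} ≤ #(links E 2 a b c d) := by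
  refine card_le_card_of_injOn (fun p => [p.1, p.2]) (fun p hp => ?_) fun p _ q _ hpq => ?_
  · simp only [coe_filter, mem_product, mem_filter, mem_univ, true_and,
      Set.mem_ofPred_eq] at hp
    obtain ⟨⟨habx, hdcy⟩, hbxy, hcxy⟩ := hp
    simp only [links, coe_filter, Set.mem_ofPred_eq, mem_lists]
    exact ⟨rfl, habx, hbxy, h.swap_right (h.swap_left hcxy), h.reverse hdcy, trivial⟩
  · simp only [List.cons.injEq, and_true] at hpq
    exact Prod.ext hpq.1 hpq.2

-- The links of `b` and `c` each miss at most `0.2001 n²` of the `0.64² n² > 2 · 0.2001 n²` pairs.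
theorem IsDense.card_links_two_ge (h : IsDense E) {a b c d : V} (hab : Extendable E 0 a b)
    (hdc : Extendable E 0 d c) :
    0.009 * (Fintype.card V : ℝ) ^ 2 ≤ #(links E 2 a b c d) := by
  set X : Finset V := {x | E a b x}
  set Y : Finset V := {y | E d c y}
  have hcard : #X * #Y ≤ #(links E 2 a b c d) +
      (#{p ∈ X ×ˢ Y | ¬ E b p.1 p.2} + #{p ∈ X ×ˢ Y | ¬ E c p.1 p.2}) :=
    calc #X * #Y ≤ #{p ∈ X ×ˢ Y | E b p.1 p.2 ∧ E c p.1 p.2} +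
          #{p ∈ X ×ˢ Y | ¬ (E b p.1 p.2 ∧ E c p.1 p.2)} := by
          rw [card_filter_add_card_filter_not, card_product]
      _ ≤ _ := by
          refine add_le_add (h.card_common_edges_le_card_links_two a b c d) ?_
          exact card_filter_le_add fun p _ => not_and_or.1
  have hXY : 0.64 * (Fintype.card V : ℝ) * (0.64 * Fintype.card V) ≤ #X * #Y :=
    mul_le_mul hab hdc (by positivity) (by positivity)
  rify at hcard
  nlinarith [h.card_not_edge_le b X Y, h.card_not_edge_le c X Y]

/-- The proportion of the `n ^ 16` candidate lists that is guaranteed to link two given linkable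
pairs. -/
def linkDensity : ℝ := 0.009 * 0.0001 ^ 14

theorem linkDensity_pos : 0 < linkDensity := by norm_num [linkDensity]

theorem linkDensity_le_one : linkDensity ≤ 1 := by norm_num [linkDensity]

theorem IsDense.card_links_ge (h : IsDense E) {a b c d : V} (hab : Linkable E a b)
    (hcd : Linkable E c d) :
    linkDensity * (Fintype.card V : ℝ) ^ 16 ≤ #(links E 16 a b c d) := by
  have extend_left : ∀ c d : V, Extendable E 0 d c → ∀ a b, Extendable E 7 a b →
      0.009 * 0.0001 ^ 7 * (Fintype.card V : ℝ) ^ 9 ≤ #(links E 9 a b c d) :=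
    fun c d hdc => card_links_add_ge (by norm_num) (fun a b hab => h.card_links_two_ge hab hdc) 7
  have extend_right : ∀ d c, Extendable E 7 d c →
      0.009 * 0.0001 ^ 7 * 0.0001 ^ 7 * (Fintype.card V : ℝ) ^ 16 ≤ #(links E 16 d c b a) := by
    refine card_links_add_ge (M := 9) (by norm_num) (fun d c hdc => ?_) 7
    exact (extend_left c d hdc a b (h.extendable_of_linkable hab)).trans
      (Nat.cast_le.2 (h.card_links_reverse_le ..))
  calc linkDensity * (Fintype.card V : ℝ) ^ 16
      = 0.009 * 0.0001 ^ 7 * 0.0001 ^ 7 * (Fintype.card V : ℝ) ^ 16 := by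
        norm_num [linkDensity]
    _ ≤ (#(links E 16 d c b a) : ℝ) :=
        extend_right d c (h.extendable_of_linkable (h.linkable_symm hcd))
    _ ≤ (#(links E 16 a b c d) : ℝ) := Nat.cast_le.2 (h.card_links_reverse_le ..)

end Links

section Walks

variable {V : Type*} [Fintype V] {R : V → V → Prop}

theorem card_related_low_degree_le (R : V → V → Prop) {t : ℝ} (ht : 0 ≤ t) :
    (#{p : V × V | R p.1 p.2 ∧ (#{a | R p.1 a} : ℝ) < t} : ℝ) ≤ Fintype.card V * t := by
  rw [← univ_product_univ, card_filter_product univ univ fun x y => R x y ∧ (#{a | R x a} : ℝ) < t,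
    ← card_univ, Nat.cast_sum, ← nsmul_eq_mul]
  refine sum_le_card_nsmul _ _ _ fun x _ => ?_
  by_cases hx : (#{a | R x a} : ℝ) < t
  · simpa only [hx, and_true] using hx.le
  · simpa only [hx, and_false, filter_false, card_empty, Nat.cast_zero] using ht

theorem card_related_high_degree_ge (hR : ∀ x y, R x y → R y x) {ρ : ℝ} (hρ : 0 ≤ ρ)
    (hcard : ρ * (Fintype.card V : ℝ) ^ 2 ≤ #{p : V × V | R p.1 p.2}) :
    ρ / 2 * (Fintype.card V : ℝ) ^ 2 ≤ #{p : V × V | R p.1 p.2 ∧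
      ρ / 4 * Fintype.card V ≤ #{a | R p.1 a} ∧ ρ / 4 * Fintype.card V ≤ #{a | R p.2 a}} := by
  set t : ℝ := ρ / 4 * Fintype.card V with ht
  have hlow := card_related_low_degree_le R (t := t) (by positivity)
  have hswap : #{p : V × V | R p.1 p.2 ∧ (#{a | R p.2 a} : ℝ) < t} ≤
      #{p : V × V | R p.1 p.2 ∧ (#{a | R p.1 a} : ℝ) < t} := by
    refine card_le_card_of_injOn Prod.swap (fun p hp => ?_) Prod.swap_injective.injOn
    simp only [coe_filter, mem_univ, true_and, Set.mem_ofPred_eq] at hp ⊢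
    exact ⟨hR _ _ hp.1, hp.2⟩
  have hcover : #{p : V × V | R p.1 p.2} ≤
      #{p : V × V | R p.1 p.2 ∧ t ≤ #{a | R p.1 a} ∧ t ≤ #{a | R p.2 a}} +
      (#{p : V × V | R p.1 p.2 ∧ (#{a | R p.1 a} : ℝ) < t} +
        #{p : V × V | R p.1 p.2 ∧ (#{a | R p.2 a} : ℝ) < t}) := by
    refine (card_filter_le_add (R := fun p => R p.1 p.2 ∧ (#{a | R p.1 a} : ℝ) < t ∨
      R p.1 p.2 ∧ (#{a | R p.2 a} : ℝ) < t) fun p _ hp => ?_).trans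
        (Nat.add_le_add_left (card_filter_le_add fun p _ => id) _)
    simp only [hp, true_and, ← not_le]
    tauto
  have hnt : Fintype.card V * t = ρ / 4 * (Fintype.card V : ℝ) ^ 2 := by
    rw [ht]
    ring
  rify at hswap hcover
  linarith

theorem card_walks_three_ge (hR : ∀ x y, R x y → R y x) {ρ : ℝ} (hρ : 0 ≤ ρ)
    (hcard : ρ * (Fintype.card V : ℝ) ^ 2 ≤ #{p : V × V | R p.1 p.2}) :
    ρ / 2 * (ρ / 4) ^ 2 * (Fintype.card V : ℝ) ^ 4 ≤
      #{p : (V × V) × (V × V) | R p.1.1 p.1.2 ∧ R p.1.1 p.2.1 ∧ R p.1.2 p.2.2} := by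
  set n : ℝ := (Fintype.card V : ℝ)
  set S : Finset (V × V) :=
    {p | R p.1 p.2 ∧ ρ / 4 * n ≤ #{a | R p.1 a} ∧ ρ / 4 * n ≤ #{a | R p.2 a}} with hS
  calc ρ / 2 * (ρ / 4) ^ 2 * n ^ 4 = ρ / 2 * n ^ 2 * (ρ / 4 * n * (ρ / 4 * n)) := by ring
    _ ≤ #S * (ρ / 4 * n * (ρ / 4 * n)) := by
        gcongr
        exact card_related_high_degree_ge hR hρ hcard
    _ ≤ #{p ∈ S ×ˢ (univ : Finset (V × V)) | R p.1.1 p.2.1 ∧ R p.1.2 p.2.2} := by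
        refine card_mul_le_card_filter_product (P := fun p q : V × V => R p.1 q.1 ∧ R p.2 q.2)
          S univ fun p hp => ?_
        obtain ⟨-, hp₁, hp₂⟩ := (mem_filter.1 hp).2
        rw [← univ_product_univ, card_filter_and_product, Nat.cast_mul]
        gcongr
    _ ≤ _ := by
        norm_cast
        refine card_le_card fun p => ?_
        simp only [hS, mem_filter, mem_product, mem_univ, true_and, and_true]
        tauto

end Walks

section Absorbers

variable {V : Type*} [Fintype V] {E : V → V → V → Prop}

/-- A list with distinguished end pairs `a b` and `c d`, at which it is attached to other blocks. -/
structure Block (V : Type*) where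
  a : V
  b : V
  interior : List V
  c : V
  d : V

namespace Block

/-- All vertices of the block in order, including both end pairs. -/
def toList (B : Block V) : List V := B.a :: B.b :: (B.interior ++ [B.c, B.d])

/-- The vertices of `X` can be inserted into the block, whose interior may be rearranged, without
changing its end pairs. -/
def Absorbs (E : V → V → V → Prop) (X : List V) (B : Block V) : Prop :=
  ∃ interior' : List V, Tight E (B.a :: B.b :: (interior' ++ [B.c, B.d])) ∧
    interior'.Perm (X ++ B.interior)

/-- The block is a tight list that can be linked to others at both ends. -/
def IsLinkable (E : V → V → V → Prop) (B : Block V) : Prop :=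
  Tight E B.toList ∧ Linkable E B.a B.b ∧ Linkable E B.c B.d

end Block

/-- The list underlies a linkable block that absorbs `v`. -/
def IsAbsorber (E : V → V → V → Prop) (v : V) (l : List V) : Prop :=
  ∃ B : Block V, B.toList = l ∧ B.IsLinkable E ∧ B.Absorbs E [v]

/-- The path `a b c d` has linkable ends and `x` can be inserted in its middle. The quadruple is
written `((b, c), (a, d))` because it is counted from the middle outwards. -/
def Inserts (E : V → V → V → Prop) (x : V) : (V × V) × (V × V) → Prop
  | ((b, c), (a, d)) =>
    Tight E [a, b, c, d] ∧ Tight E [a, b, x, c, d] ∧ Linkable E a b ∧ Linkable E c d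

/-- The vertices `v` and `x` can replace each other as middle vertex of a tight path with ends
`a b` and `c d`. The encoding is that of `Inserts`. -/
def Exchanges (E : V → V → V → Prop) (v x : V) : (V × V) × (V × V) → Prop
  | ((b, c), (a, d)) =>
    Tight E [a, b, v, c, d] ∧ Tight E [a, b, x, c, d] ∧ Linkable E a b ∧ Linkable E c d

theorem IsDense.card_not_linkable_pairs_le (h : IsDense E) :
    (#{p : V × V | ¬ Linkable E p.1 p.2} : ℝ) ≤ 0.278 * (Fintype.card V : ℝ) ^ 2 := by
  rw [← univ_product_univ, card_filter_product univ univ fun x y => ¬ Linkable E x y, Nat.cast_sum]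
  calc ∑ x : V, (#{y | ¬ Linkable E x y} : ℝ)
      ≤ #(univ : Finset V) • (0.278 * (Fintype.card V : ℝ)) :=
        sum_le_card_nsmul _ _ _ fun x _ => h.card_not_linkable_le x
    _ = 0.278 * (Fintype.card V : ℝ) ^ 2 := by
        rw [card_univ, nsmul_eq_mul]
        ring

theorem IsDense.card_common_linkable_ge (h : IsDense E) (v x : V) :
    0.32 * (Fintype.card V : ℝ) ^ 2 ≤
      #{p : V × V | E v p.1 p.2 ∧ E x p.1 p.2 ∧ Linkable E p.1 p.2} := by
  have hcover : #(univ : Finset (V × V)) ≤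
      #{p : V × V | E v p.1 p.2 ∧ E x p.1 p.2 ∧ Linkable E p.1 p.2} +
      (#{p : V × V | ¬ E v p.1 p.2} + (#{p : V × V | ¬ E x p.1 p.2} +
        #{p : V × V | ¬ Linkable E p.1 p.2})) := by
    rw [← card_filter_add_card_filter_not
      fun p : V × V => E v p.1 p.2 ∧ E x p.1 p.2 ∧ Linkable E p.1 p.2]
    refine Nat.add_le_add_left ((card_filter_le_add fun p _ => not_and_or.1).trans ?_) _
    exact Nat.add_le_add_left (card_filter_le_add fun p _ => not_and_or.1) _
  rw [card_univ, Fintype.card_prod] at hcover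
  rify at hcover
  have hv := h.card_not_edge_le v univ univ
  have hx := h.card_not_edge_le x univ univ
  rw [univ_product_univ] at hv hx
  nlinarith [h.card_not_linkable_pairs_le]

theorem IsDense.card_exchanges_ge (h : IsDense E) (v x : V) :
    0.001 * (Fintype.card V : ℝ) ^ 4 ≤ #{q | Exchanges E v x q} := by
  calc 0.001 * (Fintype.card V : ℝ) ^ 4
      ≤ 0.32 / 2 * (0.32 / 4) ^ 2 * (Fintype.card V : ℝ) ^ 4 := by
        gcongr
        norm_num
    _ ≤ _ := card_walks_three_ge
        (R := fun a b => E v a b ∧ E x a b ∧ Linkable E a b)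
        (fun a b hab => ⟨h.swap_right hab.1, h.swap_right hab.2.1, h.linkable_symm hab.2.2⟩)
        (by norm_num) (h.card_common_linkable_ge v x)
    _ ≤ #{q | Exchanges E v x q} := by
        norm_cast
        refine card_le_card fun ⟨⟨b, c⟩, a, d⟩ => ?_
        simp only [mem_filter, mem_univ, true_and]
        rintro ⟨⟨hvbc, hxbc, -⟩, ⟨hvba, hxba, hba⟩, hvcd, hxcd, hcd⟩
        exact ⟨⟨h.reverse hvba, h.swap_left hvbc, hvcd, trivial⟩,
          ⟨h.reverse hxba, h.swap_left hxbc, hxcd, trivial⟩, h.linkable_symm hba, hcd⟩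

theorem IsDense.card_isolated_le (h : IsDense E) (b : V) {D : Finset V}
    (hD : 0.795 * (Fintype.card V : ℝ) ≤ #D) :
    (#{x ∈ D | (#{a ∈ D | E b a x ∧ Linkable E b a} : ℝ) < 0.0001 * Fintype.card V} : ℝ) ≤
      0.388 * Fintype.card V := by
  set n : ℝ := (Fintype.card V : ℝ)
  set I : Finset V := {x ∈ D | (#{a ∈ D | E b a x ∧ Linkable E b a} : ℝ) < 0.0001 * n}
  set L : Finset V := {a ∈ D | Linkable E b a}
  have hL : 0.517 * n ≤ #L := by
    have hcompl := card_filter_add_card_filter_not (s := D) fun a => Linkable E b a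
    have hmono : #{a ∈ D | ¬ Linkable E b a} ≤ #{a | ¬ Linkable E b a} :=
      card_le_card (filter_subset_filter _ (subset_univ _))
    rify at hcompl hmono
    linarith [h.card_not_linkable_le b]
  have hfiber : ∀ x ∈ I, 0.5169 * n ≤ #{a ∈ L | ¬ E b x a} := by
    intro x hx
    have hcompl := card_filter_add_card_filter_not (s := L) fun a => E b x a
    have hmono : #{a ∈ L | E b x a} ≤ #{a ∈ D | E b a x ∧ Linkable E b a} := by
      refine card_le_card fun a ha => ?_
      simp only [L, mem_filter] at ha ⊢
      exact ⟨ha.1.1, h.swap_right ha.2, ha.1.2⟩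
    rify at hcompl hmono
    linarith [(mem_filter.1 hx).2]
  have hnonedges := (card_mul_le_card_filter_product I L hfiber).trans (h.card_not_edge_le b I L)
  have hscaled : #I * 0.5169 * n ≤ 0.2001 * n * n := by linarith
  linarith [le_of_mul_le_mul_right hscaled (natCast_card_pos b)]

theorem IsDense.card_codegree_ge_ge (h : IsDense E) (b : V) :
    0.0049 * (Fintype.card V : ℝ) ≤ #{c | 0.795 * (Fintype.card V : ℝ) ≤ codegree E b c} := by
  have hlow := h.card_codegree_lt_le b 0.795
  have hcompl := card_filter_add_card_filter_not (s := univ)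
    fun c => 0.795 * (Fintype.card V : ℝ) ≤ codegree E b c
  simp only [not_le, card_univ] at hcompl
  rify at hcompl
  linarith

/-- The pair `b`, `c` together with `x` completes, in many ways, to a path `a b c d` that inserts
`x`. -/
def InsertsRobustly (E : V → V → V → Prop) (b c x : V) : Prop :=
  E b c x ∧
    0.0001 * (Fintype.card V : ℝ) ≤ #{a | E b c a ∧ E b a x ∧ Linkable E b a} ∧
    0.0001 * (Fintype.card V : ℝ) ≤ #{d | E b c d ∧ E c d x ∧ Linkable E c d}

theorem IsDense.card_insertsRobustly_ge (h : IsDense E) {b c : V}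
    (hbc : 0.795 * (Fintype.card V : ℝ) ≤ codegree E b c) :
    0.018 * (Fintype.card V : ℝ) ≤ #{x | InsertsRobustly E b c x} := by
  set D : Finset V := {x | E b c x} with hD
  have hcover : #{_x ∈ D | True} ≤ #{x ∈ D | InsertsRobustly E b c x} +
      (#{x ∈ D | (#{a ∈ D | E b a x ∧ Linkable E b a} : ℝ) < 0.0001 * Fintype.card V} +
        #{x ∈ D | (#{d ∈ D | E c d x ∧ Linkable E c d} : ℝ) < 0.0001 * Fintype.card V}) := by
    refine (card_filter_le_add (R := fun _ => _ ∨ _) fun x hx _ => ?_).trans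
      (Nat.add_le_add_left (card_filter_le_add fun p _ => id) _)
    have hbcx : E b c x := (mem_filter.1 hx).2
    have hfilter (Q : V → Prop) : {a ∈ D | Q a} = ({a | E b c a ∧ Q a} : Finset V) := by
      ext a
      simp [hD]
    simp only [InsertsRobustly, hbcx, true_and, ← not_le, hfilter]
    tauto
  have hmono : #{x ∈ D | InsertsRobustly E b c x} ≤ #{x | InsertsRobustly E b c x} :=
    card_le_card (filter_subset_filter _ (subset_univ _))
  rw [filter_true] at hcover
  rify at hcover hmono
  linarith [h.card_isolated_le b (D := D) hbc, h.card_isolated_le c (D := D) hbc,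
    show (#D : ℝ) = codegree E b c from rfl]

theorem InsertsRobustly.card_inserts_ge (h : IsThreeGraph E) {b c x : V}
    (hbcx : InsertsRobustly E b c x) :
    (0.0001 * (Fintype.card V : ℝ)) ^ 2 ≤ #{q : V × V | Inserts E x ((b, c), q)} := by
  obtain ⟨hx, ha, hd⟩ := hbcx
  calc (0.0001 * (Fintype.card V : ℝ)) ^ 2
      ≤ #{a | E b c a ∧ E b a x ∧ Linkable E b a} * #{d | E b c d ∧ E c d x ∧ Linkable E c d} := by
        rw [sq]
        gcongr
    _ = #{q : V × V | (E b c q.1 ∧ E b q.1 x ∧ Linkable E b q.1) ∧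
          E b c q.2 ∧ E c q.2 x ∧ Linkable E c q.2} := by
        rw [← Nat.cast_mul, ← card_filter_and_product, univ_product_univ]
    _ ≤ #{q : V × V | Inserts E x ((b, c), q)} := by
        norm_cast
        refine card_le_card (monotone_filter_right _ fun ⟨a, d⟩ _ => ?_)
        rintro ⟨⟨hbca, hbax, hba⟩, hbcd, hcdx, hcd⟩
        exact ⟨⟨h.swap_left (h.swap_right hbca), hbcd, trivial⟩, ⟨h.swap_left hbax,
          h.swap_right hx, h.swap_left (h.swap_right hcdx), trivial⟩, h.linkable_symm hba, hcd⟩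

theorem IsDense.card_inserts_ge (h : IsDense E) :
    0.0049 * 0.018 * 0.0001 ^ 2 * (Fintype.card V : ℝ) ^ 5 ≤
      #{z : ((V × V) × V) × (V × V) | Inserts E z.1.2 (z.1.1, z.2)} := by
  set n : ℝ := (Fintype.card V : ℝ) with hn
  set S : Finset (V × V) := {p ∈ univ ×ˢ univ | 0.795 * n ≤ codegree E p.1 p.2}
  set T : Finset ((V × V) × V) := {p ∈ S ×ˢ univ | InsertsRobustly E p.1.1 p.1.2 p.2}
  have hS : n * (0.0049 * n) ≤ #S := by
    rw [hn, ← card_univ]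
    exact card_mul_le_card_filter_product univ univ fun b _ => h.card_codegree_ge_ge b
  have hT : #S * (0.018 * n) ≤ #T :=
    card_mul_le_card_filter_product (P := fun p => InsertsRobustly E p.1 p.2) S univ
      fun p hp => h.card_insertsRobustly_ge (mem_filter.1 hp).2
  calc 0.0049 * 0.018 * 0.0001 ^ 2 * n ^ 5
      = n * (0.0049 * n) * (0.018 * n) * (0.0001 * n) ^ 2 := by ring
    _ ≤ #S * (0.018 * n) * (0.0001 * n) ^ 2 := by gcongr
    _ ≤ #T * (0.0001 * n) ^ 2 := by gcongr
    _ ≤ #{z ∈ T ×ˢ univ | Inserts E z.1.2 (z.1.1, z.2)} :=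
        card_mul_le_card_filter_product (P := fun t q => Inserts E t.2 (t.1, q)) T univ
          fun t ht => (mem_filter.1 ht).2.card_inserts_ge h.toIsThreeGraph
    _ ≤ _ := Nat.cast_le.2 (card_le_card (filter_subset_filter _ (subset_univ _)))

-- Here `v` takes the place of `x`, and `x` is inserted into `a' b' c' d'`.
theorem isAbsorber_of_exchanges_of_inserts {v x a b c d a' b' c' d' : V} {y : List V}
    (hex : Exchanges E v x ((b, c), (a, d))) (hins : Inserts E x ((b', c'), (a', d')))
    (hy : Tight E (c :: d :: (y ++ [a', b']))) :
    IsAbsorber E v (a :: b :: x :: c :: d :: (y ++ [a', b', c', d'])) := by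
  obtain ⟨habvcd, habxcd, hab, -⟩ := hex
  obtain ⟨habcd', habxcd', -, hcd'⟩ := hins
  have glue_all : ∀ {z : V} {r : List V}, Tight E [a, b, z, c, d] → Tight E (a' :: b' :: r) →
      Tight E (a :: b :: z :: c :: d :: (y ++ a' :: b' :: r)) := fun hl hr =>
    hl.glue (l := [a, b, _]) (hy.glue (l := c :: d :: y) hr)
  refine ⟨⟨a, b, x :: c :: d :: (y ++ [a', b']), c', d'⟩, by simp [Block.toList],
    ⟨by simpa [Block.toList] using glue_all habxcd habcd', hab, hcd'⟩,
    v :: c :: d :: (y ++ [a', b', x]), by simpa using glue_all habvcd habxcd', .cons v ?_⟩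
  have hperm := List.perm_append_singleton x (c :: d :: (y ++ [a', b']))
  simpa using hperm

/-- The proportion of the `n ^ 25` candidate lists that is guaranteed to absorb a given vertex. -/
def absorberDensity : ℝ := 0.0049 * 0.018 * 0.0001 ^ 2 * 0.001 * linkDensity

theorem absorberDensity_pos : 0 < absorberDensity := by
  norm_num [absorberDensity, linkDensity]

theorem absorberDensity_le_linkDensity : absorberDensity ≤ linkDensity := by
  norm_num [absorberDensity, linkDensity]

/-- The data of an absorber `a b x c d y a' b' c' d'` of `v`, in the order in which it is chosen:
`((((b', c'), x), (a', d')), ((b, c), (a, d))), y`. -/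
def absorberData (E : V → V → V → Prop) (v : V) :
    Finset (((((V × V) × V) × (V × V)) × ((V × V) × (V × V))) × List V) :=
  {p ∈ ({p ∈ ({z | Inserts E z.1.2 (z.1.1, z.2)} : Finset (((V × V) × V) × (V × V))) ×ˢ univ |
      Exchanges E v p.1.1.2 p.2} : Finset ((((V × V) × V) × (V × V)) × ((V × V) × (V × V)))) ×ˢ
        lists V 16 |
    Tight E (p.1.2.1.2 :: p.1.2.2.2 :: (p.2 ++ [p.1.1.2.1, p.1.1.1.1.1]))}

theorem IsDense.card_absorberData_ge (h : IsDense E) (v : V) :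
    absorberDensity * (Fintype.card V : ℝ) ^ 25 ≤ #(absorberData E v) := by
  set n : ℝ := (Fintype.card V : ℝ)
  set S : Finset (((V × V) × V) × (V × V)) := {z | Inserts E z.1.2 (z.1.1, z.2)}
  set T : Finset ((((V × V) × V) × (V × V)) × ((V × V) × (V × V))) :=
    {p ∈ S ×ˢ univ | Exchanges E v p.1.1.2 p.2}
  have hT : #S * (0.001 * n ^ 4) ≤ #T :=
    card_mul_le_card_filter_product (P := fun z => Exchanges E v z.1.2) S univ
      fun z _ => h.card_exchanges_ge v z.1.2
  calc absorberDensity * n ^ 25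
      = 0.0049 * 0.018 * 0.0001 ^ 2 * n ^ 5 * (0.001 * n ^ 4) * (linkDensity * n ^ 16) := by
        rw [absorberDensity]
        ring
    _ ≤ #S * (0.001 * n ^ 4) * (linkDensity * n ^ 16) := by
        gcongr
        · exact mul_nonneg linkDensity_pos.le (by positivity)
        · exact h.card_inserts_ge
    _ ≤ #T * (linkDensity * n ^ 16) := by
        gcongr
        exact mul_nonneg linkDensity_pos.le (by positivity)
    _ ≤ #(absorberData E v) := by
        refine card_mul_le_card_filter_product (P := fun p y =>
          Tight E (p.2.1.2 :: p.2.2.2 :: (y ++ [p.1.2.1, p.1.1.1.1]))) T (lists V 16) fun p hp => ?_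
        simp only [T, S, mem_filter, mem_product, mem_univ, true_and, and_true] at hp
        exact h.card_links_ge hp.2.2.2.2 hp.1.2.2.1

theorem IsDense.card_isAbsorber_ge (h : IsDense E) (v : V) :
    absorberDensity * (Fintype.card V : ℝ) ^ 25 ≤ #{l ∈ lists V 25 | IsAbsorber E v l} := by
  refine (h.card_absorberData_ge v).trans (Nat.cast_le.2 ?_)
  refine card_le_card_of_injOn (fun ⟨⟨⟨⟨⟨b', c'⟩, x⟩, ⟨a', d'⟩⟩, ⟨⟨b, c⟩, ⟨a, d⟩⟩⟩, y⟩ =>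
    a :: b :: x :: c :: d :: (y ++ [a', b', c', d'])) ?_ ?_
  · rintro ⟨⟨⟨⟨⟨b', c'⟩, x⟩, ⟨a', d'⟩⟩, ⟨⟨b, c⟩, ⟨a, d⟩⟩⟩, y⟩ hp
    simp only [absorberData, coe_filter, mem_filter, mem_product, mem_univ, true_and, and_true,
      Set.mem_ofPred_eq, mem_lists] at hp ⊢
    obtain ⟨⟨⟨hins, hex⟩, hlength⟩, hy⟩ := hp
    exact ⟨by simp [hlength], isAbsorber_of_exchanges_of_inserts hex hins hy⟩
  · rintro ⟨⟨⟨⟨⟨b', c'⟩, x⟩, ⟨a', d'⟩⟩, ⟨⟨b, c⟩, ⟨a, d⟩⟩⟩, y⟩ hp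
      ⟨⟨⟨⟨⟨b₁', c₁'⟩, x₁⟩, ⟨a₁', d₁'⟩⟩, ⟨⟨b₁, c₁⟩, ⟨a₁, d₁⟩⟩⟩, y₁⟩ hp₁ heq
    simp only [absorberData, coe_filter, mem_product, Set.mem_ofPred_eq, mem_lists] at hp hp₁
    simp only [List.cons.injEq] at heq
    obtain ⟨rfl, rfl, rfl, rfl, rfl, htail⟩ := heq
    obtain ⟨rfl, hends⟩ := List.append_inj htail (hp.1.2.trans hp₁.1.2.symm)
    simp only [List.cons.injEq, and_true] at hends
    obtain ⟨rfl, rfl, rfl, rfl⟩ := hends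
    rfl

end Absorbers

section Fresh

variable {V : Type*}

/-- A list without repetitions that avoids `U`. -/
def IsFresh (U : Finset V) (l : List V) : Prop := l.Nodup ∧ ∀ x ∈ l, x ∉ U

theorem IsFresh.mono {U U' : Finset V} {l : List V} (hU : U ⊆ U') (hl : IsFresh U' l) :
    IsFresh U l :=
  ⟨hl.1, fun x hx hxU => hl.2 x hx (hU hxU)⟩

theorem isFresh_cons {U : Finset V} {x : V} {l : List V} :
    IsFresh U (x :: l) ↔ x ∉ U ∧ IsFresh (insert x U) l := by
  simp only [IsFresh, List.nodup_cons, List.forall_mem_cons, mem_insert, not_or,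
    forall_and, ← ne_eq, ← List.forall_mem_ne']
  tauto

variable [Fintype V]

theorem card_not_isFresh_mul_le (k : ℕ) (U : Finset V) :
    #{l ∈ lists V k | ¬ IsFresh U l} * Fintype.card V ≤
      k * (#U + k) * Fintype.card V ^ k := by
  induction k generalizing U with
  | zero => simp [lists, IsFresh, filter_singleton]
  | succ k ih =>
    set n := Fintype.card V with hn
    have hfiber : ∀ x, #{l ∈ lists V k | ¬ IsFresh U (x :: l)} * n ≤
        (if x ∈ U then n ^ (k + 1) else 0) + k * (#U + 1 + k) * n ^ k := by
      intro x
      split_ifs with hx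
      · rw [pow_succ, hn, ← card_lists]
        exact (Nat.mul_le_mul_right _ (card_filter_le _ _)).trans (Nat.le_add_right _ _)
      · simp only [isFresh_cons, hx, not_false_eq_true, true_and, zero_add]
        exact (ih (insert x U)).trans_eq (by rw [card_insert_of_notMem hx])
    calc #{l ∈ lists V (k + 1) | ¬ IsFresh U l} * n
        ≤ ∑ x, ((if x ∈ U then n ^ (k + 1) else 0) + k * (#U + 1 + k) * n ^ k) := by
          rw [card_filter_lists_succ, sum_mul]
          exact sum_le_sum fun x _ => hfiber x
      _ = (#U + k * (#U + 1 + k)) * n ^ (k + 1) := by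
          rw [sum_add_distrib, ← sum_filter, show ({x | x ∈ U} : Finset V) = U by ext; simp]
          simp only [sum_const, card_univ, smul_eq_mul, ← hn]
          ring
      _ ≤ (k + 1) * (#U + (k + 1)) * n ^ (k + 1) := Nat.mul_le_mul_right _ (by nlinarith)

theorem card_not_isFresh_le [Nonempty V] {k : ℕ} {η : ℝ} {U : Finset V}
    (hU : k * (#U + k : ℝ) ≤ η * Fintype.card V) :
    (#{l ∈ lists V k | ¬ IsFresh U l} : ℝ) ≤ η * (Fintype.card V : ℝ) ^ k := by
  have hn : (0 : ℝ) < Fintype.card V := Nat.cast_pos.2 Fintype.card_pos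
  refine le_of_mul_le_mul_right ?_ hn
  calc (#{l ∈ lists V k | ¬ IsFresh U l} : ℝ) * Fintype.card V
      ≤ k * (#U + k) * (Fintype.card V : ℝ) ^ k := mod_cast card_not_isFresh_mul_le k U
    _ ≤ η * Fintype.card V * (Fintype.card V : ℝ) ^ k := by gcongr
    _ = η * (Fintype.card V : ℝ) ^ k * Fintype.card V := by ring

theorem card_filter_lists_le (k : ℕ) (U : Finset V) (F : List V → Prop) :
    #{l ∈ lists V k | F l} ≤
      #{l ∈ ({l ∈ lists V k | IsFresh U l} : Finset (List V)) | F l} +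
        #{l ∈ lists V k | ¬ IsFresh U l} := by
  refine (card_le_card fun l hl => ?_).trans (card_union_le _ _)
  simp only [mem_union, mem_filter] at hl ⊢
  tauto

end Fresh

section Packings

variable {V : Type*}

/-- The vertices covered by a family of lists. -/
def vertices (T : Finset (List V)) : Finset V := T.biUnion List.toFinset

theorem mem_vertices {T : Finset (List V)} {x : V} : x ∈ vertices T ↔ ∃ l ∈ T, x ∈ l := by
  simp [vertices]

/-- A family of pairwise disjoint lists of length `K`, each without repetitions and
avoiding `U`. -/
structure IsPacking (K : ℕ) (U : Finset V) (T : Finset (List V)) : Prop where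
  length_eq : ∀ l ∈ T, l.length = K
  isFresh : ∀ l ∈ T, IsFresh U l
  disjoint : ∀ l ∈ T, ∀ l' ∈ T, l ≠ l' → l.Disjoint l'

variable {K : ℕ} {U : Finset V} {T : Finset (List V)}

theorem IsPacking.card_vertices_le (hT : IsPacking K U T) : #(vertices T) ≤ K * #T := by
  rw [mul_comm]
  refine card_biUnion_le_card_mul _ _ _ fun l hl => ?_
  exact (List.toFinset_card_le l).trans_eq (hT.length_eq l hl)

theorem notMem_of_isFresh_vertices (hK : 0 < K) {l : List V} (hl : l.length = K)
    (hfresh : IsFresh (vertices T) l) : l ∉ T := by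
  intro hlT
  obtain ⟨x, hx⟩ := List.exists_mem_of_length_pos (hl ▸ hK)
  exact hfresh.2 x hx (mem_vertices.2 ⟨l, hlT, hx⟩)

protected theorem IsPacking.insert (hT : IsPacking K U T) {l : List V} (hl : l.length = K)
    (hfresh : IsFresh (U ∪ vertices T) l) : IsPacking K U (insert l T) := by
  have hdisj : ∀ l' ∈ T, l.Disjoint l' := fun l' hl' x hx hx' =>
    hfresh.2 x hx (mem_union_right _ (mem_vertices.2 ⟨l', hl', hx'⟩))
  refine ⟨(forall_mem_insert _ _ _).2 ⟨hl, hT.length_eq⟩,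
    (forall_mem_insert _ _ _).2 ⟨hfresh.mono subset_union_left, hT.isFresh⟩,
    fun l₁ h₁ l₂ h₂ hne => ?_⟩
  obtain rfl | hl₁ := mem_insert.1 h₁ <;> obtain rfl | hl₂ := mem_insert.1 h₂
  · exact absurd rfl hne
  · exact hdisj _ hl₂
  · exact (hdisj _ hl₁).symm
  · exact hT.disjoint _ hl₁ _ hl₂ hne

theorem IsPacking.mono {U' : Finset V} {T' : Finset (List V)} (hT : IsPacking K U T)
    (hU : U' ⊆ U) (hT' : T' ⊆ T) : IsPacking K U' T' :=
  ⟨fun l hl => hT.length_eq l (hT' hl), fun l hl => (hT.isFresh l (hT' hl)).mono hU,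
    fun l hl l' hl' => hT.disjoint l (hT' hl) l' (hT' hl')⟩

theorem IsPacking.notMem_of_mem_vertices (hT : IsPacking K U T) {x : V} (hx : x ∈ vertices T) :
    x ∉ U := by
  obtain ⟨l, hl, hxl⟩ := mem_vertices.1 hx
  exact (hT.isFresh l hl).2 x hxl

protected theorem IsPacking.union {T' : Finset (List V)} (hT : IsPacking K U T)
    (hT' : IsPacking K U T')
    (hdisj : ∀ x ∈ vertices T, x ∉ vertices T') : IsPacking K U (T ∪ T') := by
  have hdisj' : ∀ l ∈ T, ∀ l' ∈ T', l.Disjoint l' := fun l hl l' hl' x hx hx' =>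
    hdisj x (mem_vertices.2 ⟨l, hl, hx⟩) (mem_vertices.2 ⟨l', hl', hx'⟩)
  refine ⟨fun l hl => (mem_union.1 hl).elim (hT.length_eq l) (hT'.length_eq l),
    fun l hl => (mem_union.1 hl).elim (hT.isFresh l) (hT'.isFresh l), fun l₁ h₁ l₂ h₂ hne => ?_⟩
  obtain hl₁ | hl₁ := mem_union.1 h₁ <;> obtain hl₂ | hl₂ := mem_union.1 h₂
  · exact hT.disjoint _ hl₁ _ hl₂ hne
  · exact hdisj' _ hl₁ _ hl₂
  · exact (hdisj' _ hl₂ _ hl₁).symm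
  · exact hT'.disjoint _ hl₁ _ hl₂ hne

protected theorem IsPacking.card_union (hK : 0 < K) {T' : Finset (List V)} (hT : IsPacking K U T)
    (hdisj : ∀ x ∈ vertices T, x ∉ vertices T') : #(T ∪ T') = #T + #T' := by
  refine card_union_of_disjoint (disjoint_left.2 fun l hl => ?_)
  exact notMem_of_isFresh_vertices hK (hT.length_eq l hl)
    ⟨(hT.isFresh l hl).1, fun x hx => hdisj x (mem_vertices.2 ⟨l, hl, hx⟩)⟩

theorem exists_sum_halved_le {α ι : Type*} {G : Finset α} (hG : G.Nonempty) (J : Finset ι)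
    {F : ι → α → Prop} {w : ι → ℝ} (hw : ∀ j ∈ J, 0 ≤ w j) {θ : ℝ}
    (hF : ∀ j ∈ J, θ * #G ≤ #{l ∈ G | F j l}) :
    ∃ l ∈ G, ∑ j ∈ J, w j * (if F j l then 1 / 2 else 1) ≤ (1 - θ / 2) * ∑ j ∈ J, w j := by
  refine exists_le_of_sum_le hG ?_
  have haverage : ∀ j ∈ J, ∑ l ∈ G, (if F j l then 1 / 2 else 1 : ℝ) ≤ #G * (1 - θ / 2) := by
    intro j hj
    have hite : ∀ l, (if F j l then 1 / 2 else 1 : ℝ) = 1 - if F j l then 1 / 2 else 0 := by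
      intro l
      split_ifs <;> norm_num
    simp only [hite, sum_sub_distrib, ← sum_filter, sum_const, nsmul_eq_mul]
    linarith [hF j hj]
  calc ∑ l ∈ G, ∑ j ∈ J, w j * (if F j l then 1 / 2 else 1)
      = ∑ j ∈ J, w j * ∑ l ∈ G, (if F j l then 1 / 2 else 1 : ℝ) := by
        rw [sum_comm]
        simp only [mul_sum]
    _ ≤ ∑ j ∈ J, w j * (#G * (1 - θ / 2)) :=
        sum_le_sum fun j hj => mul_le_mul_of_nonneg_left (haverage j hj) (hw j hj)
    _ = ∑ l ∈ G, (1 - θ / 2) * ∑ j ∈ J, w j := by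
        rw [← sum_mul, sum_const, nsmul_eq_mul]
        ring

theorem half_pow_card_filter_insert {α : Type*} {T : Finset α} {l : α} (hl : l ∉ T)
    (P : α → Prop) :
    (1 / 2 : ℝ) ^ #{x ∈ insert l T | P x} =
      (1 / 2) ^ #{x ∈ T | P x} * (if P l then 1 / 2 else 1) := by
  rw [filter_insert]
  split_ifs
  · rw [card_insert_of_notMem (by simp [hl]), pow_succ]
  · rw [mul_one]

theorem sub_log_le_of_half_pow_le {h m : ℕ} {c θ : ℝ} (hc : 0 < c) (hθ : θ ≤ 1)
    (hle : (1 / 2 : ℝ) ^ h ≤ c * (1 - θ) ^ m) : θ * m - Real.log c ≤ h := by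
  have half_ge : Real.exp (-1) ≤ 1 / 2 := by
    rw [Real.exp_neg, one_div]
    exact inv_anti₀ two_pos (by linarith [Real.add_one_le_exp 1])
  have hexp : Real.exp (h * -1) ≤ Real.exp (Real.log c + m * -θ) :=
    calc Real.exp (h * -1) = Real.exp (-1) ^ h := Real.exp_nat_mul _ _
      _ ≤ (1 / 2) ^ h := pow_le_pow_left₀ (Real.exp_pos _).le half_ge h
      _ ≤ c * (1 - θ) ^ m := hle
      _ ≤ c * Real.exp (-θ) ^ m := by
          gcongr
          linarith [Real.add_one_le_exp (-θ)]
      _ = Real.exp (Real.log c + m * -θ) := by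
          rw [Real.exp_add, Real.exp_log hc, Real.exp_nat_mul]
  linarith [Real.exp_le_exp.1 hexp]

variable [Fintype V]

theorem half_mul_card_isFresh_le [Nonempty V] {η : ℝ} (hη : 0 ≤ η)
    (hU : K * (#U + K : ℝ) ≤ η / 2 * Fintype.card V) {F : List V → Prop}
    (hF : η * (Fintype.card V : ℝ) ^ K ≤ #{l ∈ lists V K | F l}) :
    η / 2 * #{l ∈ lists V K | IsFresh U l} ≤
      #{l ∈ ({l ∈ lists V K | IsFresh U l} : Finset (List V)) | F l} := by
  have hcover := card_filter_lists_le K U F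
  have hfresh : #{l ∈ lists V K | IsFresh U l} ≤ Fintype.card V ^ K :=
    card_lists (V := V) K ▸ card_filter_le _ _
  rify at hcover hfresh
  nlinarith [card_not_isFresh_le hU]

theorem exists_isFresh [Nonempty V] {η : ℝ} (hη : η < 1)
    (hU : K * (#U + K : ℝ) ≤ η * Fintype.card V) : ∃ l ∈ lists V K, IsFresh U l := by
  by_contra! hnone
  have hle := card_not_isFresh_le hU
  rw [filter_true_of_mem hnone, card_lists, Nat.cast_pow] at hle
  have hpos : (0 : ℝ) < (Fintype.card V : ℝ) ^ K := by positivity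
  nlinarith

-- Derandomised greedy choice: each new list lowers the potential `∑ j, 2 ^ (-#{l ∈ T | F j l})` by
-- the factor `1 - η / 4`.
theorem exists_isPacking_potential_le [Nonempty V] (hK : 0 < K) {η : ℝ} (hη : 0 ≤ η)
    (hη_le : η ≤ 1) {ι : Type*} {J : Finset ι} {F : ι → List V → Prop}
    (hF : ∀ j ∈ J, η * (Fintype.card V : ℝ) ^ K ≤ #{l ∈ lists V K | F j l})
    {m : ℕ} (hm : K * (#U + K * m + K : ℝ) ≤ η / 2 * Fintype.card V) {i : ℕ} (hi : i ≤ m) :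
    ∃ T : Finset (List V), IsPacking K U T ∧ #T = i ∧
      ∑ j ∈ J, (1 / 2 : ℝ) ^ #{l ∈ T | F j l} ≤ #J * (1 - η / 4) ^ i := by
  induction i with
  | zero => exact ⟨∅, ⟨by simp, by simp, by simp⟩, rfl, by simp⟩
  | succ i ih =>
    obtain ⟨T, hT, hTcard, hpotential⟩ := ih (by lia)
    have hUT : K * (#(U ∪ vertices T) + K : ℝ) ≤ η / 2 * Fintype.card V := by
      have hcard : #(U ∪ vertices T) ≤ #U + K * m :=
        (card_union_le _ _).trans (Nat.add_le_add_left (hT.card_vertices_le.trans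
          (Nat.mul_le_mul_left K (by lia))) _)
      rify at hcard
      exact (mul_le_mul_of_nonneg_left (by linarith) K.cast_nonneg).trans hm
    obtain ⟨l₀, hl₀, hfresh₀⟩ := exists_isFresh (by linarith) hUT
    obtain ⟨l, hl, hle⟩ := exists_sum_halved_le ⟨l₀, mem_filter.2 ⟨hl₀, hfresh₀⟩⟩ J
      (w := fun j => (1 / 2 : ℝ) ^ #{l ∈ T | F j l}) (fun _ _ => by positivity)
      fun j hj => half_mul_card_isFresh_le hη hUT (hF j hj)
    rw [mem_filter, mem_lists] at hl
    have hlT : l ∉ T := notMem_of_isFresh_vertices hK hl.1 (hl.2.mono subset_union_right)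
    refine ⟨insert l T, hT.insert hl.1 hl.2, by rw [card_insert_of_notMem hlT, hTcard], ?_⟩
    simp only [half_pow_card_filter_insert hlT]
    calc _ ≤ (1 - η / 2 / 2) * ∑ j ∈ J, (1 / 2 : ℝ) ^ #{l ∈ T | F j l} := hle
      _ ≤ (1 - η / 2 / 2) * (#J * (1 - η / 4) ^ i) :=
          mul_le_mul_of_nonneg_left hpotential (by linarith)
      _ = #J * (1 - η / 4) ^ (i + 1) := by ring

universe u v

theorem exists_isPacking (hK : 0 < K) {η : ℝ} (hη : 0 < η) (hη_le : η ≤ 1)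
    {μ : ℝ} (hμ : 0 < μ) :
    ∃ N : ℕ, ∀ (V : Type u) [Fintype V], N ≤ Fintype.card V →
      ∀ (ι : Type v) (J : Finset ι) (F : ι → List V → Prop) (U : Finset V),
      #J ≤ Fintype.card V ^ 4 →
      (∀ j ∈ J, η * (Fintype.card V : ℝ) ^ K ≤ #{l ∈ lists V K | F j l}) →
      K * (#U + K * (μ * Fintype.card V) + K : ℝ) ≤ η / 2 * Fintype.card V →
      ∃ T : Finset (List V), IsPacking K U T ∧ (#T : ℝ) ≤ μ * Fintype.card V ∧
        ∀ j ∈ J, η * μ / 8 * Fintype.card V ≤ #{l ∈ T | F j l} := by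
  have hlog : ∀ᶠ n : ℕ in Filter.atTop, Real.log n ≤ η * μ / 64 * n := by
    have hlittle := (Real.isLittleO_log_id_atTop.comp_tendsto tendsto_natCast_atTop_atTop).def
      (c := η * μ / 64) (by positivity)
    filter_upwards [hlittle] with n hn
    simpa using (le_abs_self _).trans hn
  obtain ⟨N, hN⟩ := Filter.eventually_atTop.1
    (hlog.and (tendsto_natCast_atTop_atTop.eventually_ge_atTop (4 / μ)))
  refine ⟨max N 1, fun V _ hV ι J F U hJ hF hU => ?_⟩
  have : Nonempty V := Fintype.card_pos_iff.1 (by lia)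
  obtain ⟨hlog, hlarge⟩ := hN _ ((le_max_left _ _).trans hV)
  set n : ℝ := (Fintype.card V : ℝ)
  have hμn : 4 ≤ μ * n := by rwa [div_le_iff₀' hμ] at hlarge
  have hfloor : (⌊μ * n⌋₊ : ℝ) ≤ μ * n := Nat.floor_le (by positivity)
  obtain ⟨T, hT, hTcard, hpotential⟩ := exists_isPacking_potential_le hK hη.le hη_le hF
    (m := ⌊μ * n⌋₊) (le_trans (by gcongr) hU) le_rfl
  refine ⟨T, hT, by rwa [hTcard], fun j hj => ?_⟩
  have hcount : η / 4 * ⌊μ * n⌋₊ - Real.log #J ≤ #{l ∈ T | F j l} := by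
    refine sub_log_le_of_half_pow_le (by exact_mod_cast card_pos.2 ⟨j, hj⟩) (by linarith) ?_
    exact (single_le_sum (f := fun j => (1 / 2 : ℝ) ^ #{l ∈ T | F j l})
      (fun _ _ => by positivity) hj).trans hpotential
  have hlogJ : Real.log #J ≤ 4 * Real.log n := by
    rw [← Nat.cast_ofNat, ← Real.log_pow]
    exact Real.log_le_log (mod_cast card_pos.2 ⟨j, hj⟩) (by simp only [n]; exact_mod_cast hJ)
  nlinarith [Nat.lt_floor_add_one (μ * n)]

end Packings

section SignSums

variable {V : Type*}

theorem sum_sum_sdiff {f : V → V → ℝ} {B S : Finset V} (hB : B ⊆ S) :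
    ∑ x ∈ S \ B, ∑ y ∈ S \ B, f x y =
      ∑ x ∈ S, ∑ y ∈ S, f x y - ∑ x ∈ B, ∑ y ∈ S, f x y - ∑ x ∈ S, ∑ y ∈ B, f x y +
        ∑ x ∈ B, ∑ y ∈ B, f x y := by
  simp only [sum_sdiff_eq_sub hB, sum_sub_distrib]
  ring

theorem sum_sum_erase {f : V → V → ℝ} {S : Finset V} {i : V} (hi : i ∈ S) :
    ∑ x ∈ S.erase i, ∑ y ∈ S.erase i, f x y =
      ∑ x ∈ S, ∑ y ∈ S, f x y - ∑ y ∈ S, f i y - ∑ x ∈ S, f x i + f i i := by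
  rw [erase_eq, sum_sum_sdiff (singleton_subset_iff.2 hi)]
  simp only [sum_singleton]

/-- The adjacency sign of a relation: `1` on related pairs and `-1` on the others. -/
def relSign (R : V → V → Prop) (x y : V) : ℝ := if R x y then 1 else -1

theorem relSign_le_one (R : V → V → Prop) (x y : V) : relSign R x y ≤ 1 := by
  unfold relSign
  split_ifs <;> norm_num

theorem neg_one_le_relSign (R : V → V → Prop) (x y : V) : -1 ≤ relSign R x y := by
  unfold relSign
  split_ifs <;> norm_num

theorem sum_relSign (R : V → V → Prop) (x : V) (S : Finset V) :
    ∑ y ∈ S, relSign R x y = 2 * #{y ∈ S | R x y} - #S := by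
  have hsign : ∀ y, relSign R x y = 2 * (if R x y then 1 else 0) - 1 := by
    intro y
    unfold relSign
    split_ifs <;> norm_num
  simp only [hsign, sum_sub_distrib, ← mul_sum, sum_boole, sum_const, nsmul_eq_mul, mul_one]

theorem sum_sum_le_of_le {f : V → V → ℝ} {ω : ℝ} (hf : ∀ x y, f x y ≤ ω) (S T : Finset V) :
    ∑ x ∈ S, ∑ y ∈ T, f x y ≤ #S * #T * ω := by
  calc ∑ x ∈ S, ∑ y ∈ T, f x y ≤ ∑ _x ∈ S, ∑ _y ∈ T, ω := by gcongr; apply hf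
    _ = #S * #T * ω := by simp only [sum_const, nsmul_eq_mul, mul_assoc]

theorem le_sum_sum_of_le {f : V → V → ℝ} {ω : ℝ} (hf : ∀ x y, ω ≤ f x y) (S T : Finset V) :
    #S * #T * ω ≤ ∑ x ∈ S, ∑ y ∈ T, f x y := by
  calc #S * #T * ω = ∑ _x ∈ S, ∑ _y ∈ T, ω := by simp only [sum_const, nsmul_eq_mul, mul_assoc]
    _ ≤ ∑ x ∈ S, ∑ y ∈ T, f x y := by gcongr; apply hf

end SignSums

section GraphPaths

variable {V : Type*} {G : SimpleGraph V}

theorem relSign_adj_comm (x y : V) : relSign G.Adj x y = relSign G.Adj y x := by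
  simp only [relSign, G.adj_comm x y]

-- Deleting a vertex joined to less than half of `C` does not decrease the sign sum.
theorem exists_subset_half_degree {r : ℝ} (C : Finset V)
    (hr : r ≤ ∑ x ∈ C, ∑ y ∈ C, relSign G.Adj x y) :
    ∃ U ⊆ C, r ≤ (#U : ℝ) ^ 2 ∧ ∀ x ∈ U, #U ≤ 2 * #{y ∈ U | G.Adj x y} := by
  induction C using Finset.strongInduction with
  | H C ih =>
    by_cases hdeg : ∀ x ∈ C, #C ≤ 2 * #{y ∈ C | G.Adj x y}
    · refine ⟨C, subset_rfl, hr.trans ?_, hdeg⟩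
      simpa [sq] using sum_sum_le_of_le (relSign_le_one G.Adj) C C
    push Not at hdeg
    obtain ⟨x, hx, hlow⟩ := hdeg
    have herase : r ≤ ∑ y ∈ C.erase x, ∑ z ∈ C.erase x, relSign G.Adj y z := by
      have hloop : relSign G.Adj x x = -1 := by simp [relSign]
      have hlow' : (2 * #{y ∈ C | G.Adj x y} : ℝ) + 1 ≤ #C := mod_cast hlow
      rw [sum_sum_erase hx, sum_congr rfl fun y _ => relSign_adj_comm y x, sum_relSign, hloop]
      linarith
    obtain ⟨U, hU, hUr, hUdeg⟩ := ih _ (erase_ssubset hx) herase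
    exact ⟨U, hU.trans (erase_subset _ _), hUr, hUdeg⟩

/-- The list `l` is a path of `G` inside `U`. -/
structure IsPathIn (G : SimpleGraph V) (U : Finset V) (l : List V) : Prop where
  nodup : l.Nodup
  isChain : l.IsChain G.Adj
  mem : ∀ x ∈ l, x ∈ U

variable {U : Finset V} {P : List V}

theorem IsPathIn.mono {U' : Finset V} (hU : U ⊆ U') (hP : IsPathIn G U P) : IsPathIn G U' P :=
  ⟨hP.nodup, hP.isChain, fun x hx => hU (hP.mem x hx)⟩

theorem IsPathIn.of_perm {Q : List V} (hP : IsPathIn G U P) (hQ : Q.Perm P)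
    (hchain : Q.IsChain G.Adj) : IsPathIn G U Q :=
  ⟨hQ.nodup_iff.2 hP.nodup, hchain, fun x hx => hP.mem x (hQ.mem_iff.1 hx)⟩

theorem isChain_adj_reverse (hP : P.IsChain G.Adj) : P.reverse.IsChain G.Adj :=
  List.isChain_reverse.2 (hP.imp fun _ _ h => h.symm)

theorem IsPathIn.cons {x : V} (hP : IsPathIn G U P) (hxU : x ∈ U) (hxP : x ∉ P)
    (hadj : ∀ y ∈ P.head?, G.Adj x y) : IsPathIn G U (x :: P) :=
  ⟨hP.nodup.cons hxP, List.isChain_cons.2 ⟨hadj, hP.isChain⟩,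
    List.forall_mem_cons.2 ⟨hxU, hP.mem⟩⟩

theorem exists_consecutive (p q : V → Prop) (l : List V) (x : V)
    (hcount : l.length < l.countP p + (x :: l).dropLast.countP q) :
    ∃ A y z B, x :: l = (A ++ [y]) ++ z :: B ∧ q y ∧ p z := by
  induction l generalizing x with
  | nil => simp at hcount
  | cons z l ih =>
    by_cases hxz : q x ∧ p z
    · exact ⟨[], x, z, l, rfl, hxz⟩
    have hrest : l.length < l.countP p + (z :: l).dropLast.countP q := by
      rw [List.dropLast_cons_cons, List.countP_cons, List.countP_cons, List.length_cons] at hcount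
      by_cases hx : q x <;> by_cases hz : p z <;> simp [hx, hz] at hxz hcount <;> lia
    obtain ⟨A, y, w, B, heq, hy, hw⟩ := ih z hrest
    exact ⟨x :: A, y, w, B, by rw [heq]; rfl, hy, hw⟩

theorem card_filter_adj_le_countP {a : V} {l : List V} (hl : ∀ x ∈ U, G.Adj a x → x ∈ l) :
    #{y ∈ U | G.Adj a y} ≤ l.countP (G.Adj a ·) := by
  rw [List.countP_eq_length_filter]
  refine (card_le_card fun x hx => ?_).trans (List.toFinset_card_le _)
  rw [mem_filter] at hx
  simp [hx.2, hl x hx.1 hx.2]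

/-- A list that closes up: its last entry is adjacent to its first. -/
def ClosesUp (G : SimpleGraph V) (l : List V) : Prop :=
  ∀ u ∈ l.getLast?, ∀ v ∈ l.head?, G.Adj u v

theorem isChain_append_swap {A B : List V} (hA : A ≠ []) (hB : B ≠ [])
    (hchain : (A ++ B).IsChain G.Adj) (hclose : ClosesUp G (A ++ B)) :
    (B ++ A).IsChain G.Adj := by
  rw [List.isChain_append] at hchain ⊢
  refine ⟨hchain.2.1, hchain.1, fun u hu v hv => hclose u ?_ v ?_⟩
  · rwa [List.getLast?_append_of_ne_nil _ hB]
  · rwa [List.head?_append_of_ne_nil _ hA]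

theorem exists_isChain_head_of_closesUp {c : V} (hc : c ∈ P) (hchain : P.IsChain G.Adj)
    (hclose : ClosesUp G P) : ∃ Q, (c :: Q).Perm P ∧ (c :: Q).IsChain G.Adj := by
  obtain ⟨A, B, rfl⟩ := List.append_of_mem hc
  rcases eq_or_ne A [] with rfl | hA
  · exact ⟨B, .refl _, hchain⟩
  · exact ⟨B ++ A, List.perm_append_comm (l₁ := c :: B),
      isChain_append_swap hA (List.cons_ne_nil c B) hchain hclose⟩

-- The crossing of Ore's argument: if `a … y z … b` is a path, `a` is adjacent to `z` and `b` to
-- `y`, then `b … z a … y` closes up.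
theorem exists_perm_closesUp {a b : V} {l : List V} (hchain : (a :: l).IsChain G.Adj)
    (hlast : (a :: l).getLast? = some b)
    (hcount : l.length < l.countP (G.Adj a ·) + (a :: l).dropLast.countP (G.Adj b ·)) :
    ∃ C : List V, C.Perm (a :: l) ∧ C.IsChain G.Adj ∧ ClosesUp G C := by
  obtain ⟨A, y, z, B, hsplit, hby, haz⟩ := exists_consecutive (G.Adj a ·) (G.Adj b ·) l a hcount
  have hhead : (A ++ [y]).head? = some a := by
    rw [← List.head?_append_of_ne_nil (l₂ := z :: B) _ (by simp), ← hsplit, List.head?_cons]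
  rw [hsplit, List.isChain_append] at hchain
  rw [hsplit, List.getLast?_append_of_ne_nil _ (List.cons_ne_nil z B)] at hlast
  refine ⟨(z :: B).reverse ++ (A ++ [y]), ?_, ?_, ?_⟩
  · rw [hsplit]
    exact ((z :: B).reverse_perm.append_right _).trans List.perm_append_comm
  · refine List.isChain_append.2 ⟨isChain_adj_reverse hchain.2.1, hchain.1, ?_⟩
    simpa [hhead] using haz.symm
  · intro u hu v hv
    rw [List.head?_append_of_ne_nil _ (by simp), List.head?_reverse, hlast, Option.mem_some] at hv
    simp only [← List.append_assoc, List.getLast?_concat, Option.mem_some] at hu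
    exact hv ▸ hu ▸ hby.symm

theorem exists_adj_mem_of_half_degree {w : V} (hPU : ∀ x ∈ P, x ∈ U) (hP : P.Nodup) (hwU : w ∈ U)
    (hwP : w ∉ P) (hw : #U ≤ 2 * #{y ∈ U | G.Adj w y}) (hlarge : #U ≤ 2 * P.length) :
    ∃ c ∈ P, G.Adj w c := by
  by_contra! hnone
  have hsub : ({y ∈ U | G.Adj w y} : Finset V) ⊂ U \ P.toFinset := by
    refine (ssubset_iff_of_subset fun y hy => ?_).2 ⟨w, by simp [hwU, hwP], by simp⟩
    rw [mem_filter] at hy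
    simpa [hy.1] using fun hyP => hnone y hyP hy.2
  have hcard := card_lt_card hsub
  rw [card_sdiff_of_subset (by simpa [subset_iff]), List.toFinset_card_of_nodup hP] at hcard
  lia

theorem IsPathIn.exists_perm_cons {w : V} (hP : IsPathIn G U P)
    (hU : ∀ x ∈ U, #U ≤ 2 * #{y ∈ U | G.Adj x y}) (hwU : w ∈ U) (hwP : w ∉ P) :
    ∃ x Q, Q.Perm P ∧ IsPathIn G U (x :: Q) := by
  rcases P with _ | ⟨a, l⟩
  · exact ⟨w, [], .refl _, hP.cons hwU hwP (by simp)⟩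
  obtain ⟨b, hb⟩ : ∃ b, (a :: l).getLast? = some b :=
    ⟨_, List.getLast?_eq_some_getLast (List.cons_ne_nil a l)⟩
  by_cases hfirst : ∃ x ∈ U, G.Adj a x ∧ x ∉ a :: l
  · obtain ⟨x, hxU, hax, hxP⟩ := hfirst
    exact ⟨x, _, .refl _, hP.cons hxU hxP (by simpa using hax.symm)⟩
  by_cases hlast : ∃ x ∈ U, G.Adj b x ∧ x ∉ a :: l
  · obtain ⟨x, hxU, hbx, hxP⟩ := hlast
    have hrev := hP.of_perm (a :: l).reverse_perm (isChain_adj_reverse hP.isChain)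
    refine ⟨x, _, (a :: l).reverse_perm, hrev.cons hxU (by rwa [List.mem_reverse]) ?_⟩
    rw [List.head?_reverse, hb]
    simpa using hbx.symm
  push Not at hfirst hlast
  have hinit : (a :: l).dropLast ++ [b] = a :: l := List.dropLast_append_getLast? b hb
  have ha : #{y ∈ U | G.Adj a y} ≤ l.countP (G.Adj a ·) := card_filter_adj_le_countP
    fun x hxU hax => (List.mem_cons.1 (hfirst x hxU hax)).resolve_left hax.ne'
  have hb' : #{y ∈ U | G.Adj b y} ≤ (a :: l).dropLast.countP (G.Adj b ·) := by
    refine card_filter_adj_le_countP fun x hxU hbx => ?_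
    have hx := hlast x hxU hbx
    rw [← hinit, List.mem_append, List.mem_singleton] at hx
    exact hx.resolve_right hbx.ne'
  have hdega := hU a (hP.mem a List.mem_cons_self)
  have hdegb := hU b (hP.mem b (List.mem_of_getLast? hb))
  have hcountP : l.countP (G.Adj a ·) ≤ l.length := List.countP_le_length
  obtain ⟨C, hC, hchain, hclose⟩ := exists_perm_closesUp hP.isChain hb (by
    have hlt : #(a :: l).toFinset < #U := card_lt_card <|
      (ssubset_iff_of_subset (by simpa [subset_iff] using hP.mem)).2 ⟨w, hwU, by simpa using hwP⟩
    rw [List.toFinset_card_of_nodup hP.nodup, List.length_cons] at hlt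
    lia)
  obtain ⟨c, hc, hwc⟩ := exists_adj_mem_of_half_degree hP.mem hP.nodup hwU hwP (hU w hwU)
    (by rw [List.length_cons]; lia)
  obtain ⟨Q, hQ, hcQ⟩ := exists_isChain_head_of_closesUp (hC.mem_iff.2 hc) hchain hclose
  exact ⟨w, c :: Q, hQ.trans hC, (hP.of_perm (hQ.trans hC) hcQ).cons hwU
    (fun hw => hwP ((hQ.trans hC).mem_iff.1 hw)) (by simpa using hwc)⟩

-- Dirac's theorem for paths.
theorem exists_isPathIn_of_half_degree (hU : ∀ x ∈ U, #U ≤ 2 * #{y ∈ U | G.Adj x y}) {k : ℕ}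
    (hk : k ≤ #U) : ∃ P, IsPathIn G U P ∧ P.length = k := by
  induction k with
  | zero => exact ⟨[], ⟨.nil, .nil, by simp⟩, rfl⟩
  | succ k ih =>
    obtain ⟨P, hP, rfl⟩ := ih (Nat.le_of_succ_le hk)
    obtain ⟨w, hwU, hwP⟩ : ∃ w ∈ U, w ∉ P.toFinset :=
      exists_mem_notMem_of_card_lt_card ((List.toFinset_card_le P).trans_lt hk)
    obtain ⟨x, Q, hQ, hxQ⟩ := hP.exists_perm_cons hU hwU (by simpa using hwP)
    exact ⟨x :: Q, hxQ, by rw [List.length_cons, hQ.length_eq]⟩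

theorem exists_isPathIn_of_sq_le_sum_relSign {C : Finset V} {t : ℕ}
    (ht : (t : ℝ) ^ 2 ≤ ∑ x ∈ C, ∑ y ∈ C, relSign G.Adj x y) :
    ∃ P, IsPathIn G C P ∧ P.length = t := by
  obtain ⟨U, hUC, hcard, hU⟩ := exists_subset_half_degree C ht
  obtain ⟨P, hP, hlen⟩ := exists_isPathIn_of_half_degree hU
    (Nat.cast_le.1 ((pow_le_pow_iff_left₀ t.cast_nonneg (Nat.cast_nonneg _) two_ne_zero).1 hcard))
  exact ⟨P, hP.mono hUC, hlen⟩

end GraphPaths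

section Tiles

theorem exists_subset_offDiag_sum_ge {ι : Type*} {f : ι → ι → ℝ} {c : ℝ} {k : ℕ} (hk : 0 < k)
    {I : Finset ι} (hkI : k ≤ #I)
    (hI : c * #I * (#I - 1) ≤ ∑ i ∈ I, ∑ j ∈ I, f i j - ∑ i ∈ I, f i i) :
    ∃ K ⊆ I, #K = k ∧ c * k * (k - 1) ≤ ∑ i ∈ K, ∑ j ∈ K, f i j - ∑ i ∈ K, f i i := by
  induction I using Finset.strongInduction with
  | H I ih =>
    obtain hkI | hkI := hkI.eq_or_lt
    · exact ⟨I, subset_rfl, hkI.symm, by rwa [hkI]⟩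
    set t : ℝ := (#I : ℝ) with ht
    set s := ∑ i ∈ I, ∑ j ∈ I, f i j - ∑ i ∈ I, f i i with hs
    have ht2 : 2 ≤ t := Nat.ofNat_le_cast.2 (Nat.lt_of_le_of_lt hk hkI)
    have hst : c * (t - 1) ≤ s / t := by rw [le_div_iff₀ (by linarith)]; linarith
    obtain ⟨i, hi, hlow⟩ : ∃ i ∈ I, ∑ j ∈ I, f i j + ∑ j ∈ I, f j i - 2 * f i i ≤ 2 * (s / t) := by
      refine exists_le_of_sum_le (card_pos.1 (hk.trans hkI)) (le_of_eq ?_)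
      rw [sum_sub_distrib, sum_add_distrib, sum_comm (f := fun i j => f j i), ← mul_sum, sum_const,
        nsmul_eq_mul, ← ht, mul_left_comm, mul_div_cancel₀ s (by linarith), hs]
      ring
    have hcard : (#(I.erase i) : ℝ) = t - 1 := by
      rw [card_erase_of_mem hi, Nat.cast_sub (hk.trans hkI), Nat.cast_one]
    obtain ⟨K, hK, hKcard, hKsum⟩ := ih _ (erase_ssubset hi)
      (by rw [card_erase_of_mem hi]; lia) (by
        rw [sum_sum_erase hi, sum_erase_eq_sub hi, hcard]
        have hfactor : c * (t - 1) * (t - 2) ≤ s / t * (t - 2) :=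
          mul_le_mul_of_nonneg_right hst (by linarith)
        have hcancel : s / t * t = s := div_mul_cancel₀ s (by linarith)
        linarith)
    exact ⟨K, hK.trans (erase_subset i I), hKcard, hKsum⟩

variable {V : Type*} {L : ℕ}

/-- A family of pairwise disjoint sets of size `L`. -/
structure IsTileFamily (L : ℕ) (C : Finset (Finset V)) : Prop where
  card_eq : ∀ T ∈ C, #T = L
  pairwiseDisjoint : (C : Set (Finset V)).PairwiseDisjoint id

namespace IsTileFamily

variable {C : Finset (Finset V)}

theorem mono {D : Finset (Finset V)} (hC : IsTileFamily L C) (hD : D ⊆ C) : IsTileFamily L D :=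
  ⟨fun T hT => hC.card_eq T (hD hT), hC.pairwiseDisjoint.subset (coe_subset.2 hD)⟩

theorem card_biUnion (hC : IsTileFamily L C) : #(C.biUnion id) = #C * L := by
  exact (Finset.card_biUnion hC.pairwiseDisjoint).trans (sum_const_nat hC.card_eq)

theorem sum_sum_biUnion (hC : IsTileFamily L C) (g : V → V → ℝ) :
    ∑ x ∈ C.biUnion id, ∑ y ∈ C.biUnion id, g x y =
      ∑ T ∈ C, ∑ T' ∈ C, ∑ x ∈ T, ∑ y ∈ T', g x y := by
  simp only [sum_biUnion hC.pairwiseDisjoint, id]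
  exact sum_congr rfl fun T _ => sum_comm

theorem exists_of_finset (hL : 0 < L) (W : Finset V) :
    ∃ D : Finset (Finset V), IsTileFamily L D ∧ (∀ T ∈ D, T ⊆ W) ∧ #(W \ D.biUnion id) ≤ L := by
  obtain ⟨W', hW', hcard⟩ := exists_subset_card_eq (Nat.mul_div_le #W L)
  have hsize : #W / L * L + 0 * (L + 1) = #W' := by rw [hcard]; ring
  set D := (⊤ : Finpartition W').equitabilise hsize
  have hbig := Finpartition.card_filter_equitabilise_big ⊤ hsize
  simp only [card_eq_zero, filter_eq_empty_iff] at hbig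
  refine ⟨D.parts, ⟨fun T hT => ?_, D.disjoint⟩, fun T hT => (D.le hT).trans hW', ?_⟩
  · exact (Finpartition.card_eq_of_mem_parts_equitabilise hT).resolve_right (hbig hT)
  · rw [D.biUnion_parts, card_sdiff_of_subset hW', hcard]
    have := Nat.div_add_mod #W L
    have := Nat.mod_lt #W hL
    lia

end IsTileFamily

theorem sum_sum_ge_of_card_compl_le [Fintype V] {g : V → V → ℝ} {ω m : ℝ}
    (hg : ∀ x y, g x y ≤ ω) (hω : 0 ≤ ω) {A : Finset V} (hA : (#Aᶜ : ℝ) ≤ m) :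
    ∑ x, ∑ y, g x y - 2 * m * Fintype.card V * ω ≤ ∑ x ∈ A, ∑ y ∈ A, g x y := by
  have hrows : ∑ x, ∑ y, g x y = ∑ x ∈ A, ∑ y, g x y + ∑ x ∈ Aᶜ, ∑ y, g x y :=
    (sum_add_sum_compl A _).symm
  have hcolumns : ∑ x ∈ A, ∑ y, g x y = ∑ x ∈ A, ∑ y ∈ A, g x y + ∑ x ∈ A, ∑ y ∈ Aᶜ, g x y := by
    rw [← sum_add_distrib]
    exact sum_congr rfl fun x _ => (sum_add_sum_compl A _).symm
  have hrows_le : ∑ x ∈ Aᶜ, ∑ y, g x y ≤ m * Fintype.card V * ω := by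
    refine (sum_sum_le_of_le hg Aᶜ univ).trans ?_
    rw [card_univ]
    gcongr
  have hcolumns_le : ∑ x ∈ A, ∑ y ∈ Aᶜ, g x y ≤ m * Fintype.card V * ω := by
    refine (sum_sum_le_of_le hg A Aᶜ).trans ?_
    rw [mul_comm m]
    gcongr
    exact card_le_univ A
  linarith

theorem IsTileFamily.sum_diag_le {g : V → V → ℝ} {c : ℝ} (hg : ∀ x y, g x y ≤ c)
    {C : Finset (Finset V)} (hC : IsTileFamily L C) :
    ∑ T ∈ C, ∑ x ∈ T, ∑ y ∈ T, g x y ≤ #C * (L ^ 2 * c) := by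
  rw [← nsmul_eq_mul]
  refine sum_le_card_nsmul _ _ _ fun T hT => (sum_sum_le_of_le hg T T).trans_eq ?_
  rw [hC.card_eq T hT, sq]

theorem IsTileFamily.exists_subset_sum_ge [Fintype V] {g : V → V → ℝ} {ω : ℝ}
    (hg : ∀ x y, g x y ≤ ω) (hg' : ∀ x y, -ω ≤ g x y) (hω : 0 ≤ ω)
    (hsum : 0.5998 * (Fintype.card V : ℝ) ^ 2 * ω ≤ ∑ x, ∑ y, g x y) {C : Finset (Finset V)}
    (hC : IsTileFamily L C) (hL : (L : ℝ) ≤ 0.001 * Fintype.card V)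
    (hmiss : (#(C.biUnion id)ᶜ : ℝ) ≤ 0.002 * Fintype.card V) (hn : 0 < Fintype.card V) :
    ∃ K ⊆ C, #K = 50 ∧
      0.55 * (50 * L : ℝ) ^ 2 * ω ≤ ∑ x ∈ K.biUnion id, ∑ y ∈ K.biUnion id, g x y := by
  set n : ℝ := (Fintype.card V : ℝ)
  set t : ℝ := (#C : ℝ)
  have hn0 : 0 < n := Nat.cast_pos.2 hn
  have hcover : t * L + #(C.biUnion id)ᶜ = n := by
    have := card_add_card_compl (C.biUnion id)
    rw [hC.card_biUnion] at this
    simp only [t, n]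
    exact_mod_cast this
  have ht : 50 ≤ t := by
    have : t * L ≤ t * (0.001 * n) := by gcongr
    refine le_of_mul_le_mul_right (a := 0.001 * n) ?_ (by positivity)
    linarith
  have htL : t * L ≤ n := by linarith [(#(C.biUnion id)ᶜ).cast_nonneg (α := ℝ)]
  have hdiag : ∑ T ∈ C, ∑ x ∈ T, ∑ y ∈ T, g x y ≤ 0.001 * n ^ 2 * ω :=
    calc ∑ T ∈ C, ∑ x ∈ T, ∑ y ∈ T, g x y ≤ t * (L ^ 2 * ω) := hC.sum_diag_le hg
      _ = t * L * L * ω := by ring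
      _ ≤ n * (0.001 * n) * ω := by gcongr
      _ = 0.001 * n ^ 2 * ω := by ring
  obtain ⟨K, hK, hKcard, hKsum⟩ := exists_subset_offDiag_sum_ge
    (f := fun T T' => ∑ x ∈ T, ∑ y ∈ T', g x y) (c := 0.59 * L ^ 2 * ω) (k := 50) (by norm_num)
    (I := C) (Nat.ofNat_le_cast.1 ht) (by
      rw [← hC.sum_sum_biUnion]
      have hsquare : (t * L) ^ 2 * ω ≤ n ^ 2 * ω := by gcongr
      have hpos : 0 ≤ L ^ 2 * ω * t := by positivity
      nlinarith [sum_sum_ge_of_card_compl_le hg hω hmiss])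
  refine ⟨K, hK, hKcard, ?_⟩
  have hdiag' := (hC.mono hK).sum_diag_le fun x y => neg_le.1 (hg' x y)
  simp only [sum_neg_distrib, hKcard] at hdiag'
  rw [(hC.mono hK).sum_sum_biUnion]
  have hpos : 0 ≤ (L : ℝ) ^ 2 * ω := by positivity
  push_cast at hKsum hdiag'
  nlinarith

end Tiles

section LinkSigns

variable {V : Type*} [Fintype V] {E : V → V → V → Prop}

/-- The sign of the pair `x`, `y` in the link of `w`, counted only if `x` and `y` are both linkable
to `w`. -/
def linkSign (E : V → V → V → Prop) (w x y : V) : ℝ :=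
  if Linkable E w x ∧ Linkable E w y then relSign (E w) x y else 0

theorem linkSign_le_one (w x y : V) : linkSign E w x y ≤ 1 := by
  unfold linkSign
  split_ifs
  · exact relSign_le_one _ x y
  · exact zero_le_one

theorem neg_one_le_linkSign (w x y : V) : -1 ≤ linkSign E w x y := by
  unfold linkSign
  split_ifs
  · exact neg_one_le_relSign _ x y
  · norm_num

theorem sum_linkSign (w : V) (S : Finset V) :
    ∑ x ∈ S, ∑ y ∈ S, linkSign E w x y =
      ∑ x ∈ S with Linkable E w x, ∑ y ∈ S with Linkable E w y, relSign (E w) x y := by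
  simp only [sum_filter, linkSign]
  refine sum_congr rfl fun x _ => ?_
  by_cases hx : Linkable E w x <;> simp [hx]

-- A vertex `x` that is not linkable to `w` has negative row sum in the sign matrix of the link of
-- `w`, so passing to the linkable vertices loses only the entries between non-linkable ones.
theorem IsDense.sum_linkSign_ge (h : IsDense E) (w : V) :
    0.5998 * (Fintype.card V : ℝ) ^ 2 ≤ ∑ x, ∑ y, linkSign E w x y := by
  set n : ℝ := (Fintype.card V : ℝ)
  set B : Finset V := {x | ¬ Linkable E w x}
  have hrow : ∀ x, ∑ y, relSign (E w) x y = 2 * codegree E w x - n := fun x => sum_relSign _ x univ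
  have htotal : 0.5998 * n ^ 2 ≤ ∑ x, ∑ y, relSign (E w) x y := by
    have hdeg := h.degree w
    rw [← sum_codegree, Nat.cast_sum] at hdeg
    simp only [hrow, sum_sub_distrib, ← mul_sum, sum_const, card_univ, nsmul_eq_mul]
    linarith
  have hBrow : ∑ x ∈ B, ∑ y, relSign (E w) x y ≤ #B * (-0.44 * n) := by
    rw [← nsmul_eq_mul]
    refine sum_le_card_nsmul _ _ _ fun x hx => ?_
    have hx' : codegree E w x < 0.28 * n := by simpa [B, Linkable] using hx
    linarith [hrow x]
  have hsymm : ∑ x, ∑ y ∈ B, relSign (E w) x y = ∑ x ∈ B, ∑ y, relSign (E w) x y := by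
    rw [sum_comm]
    refine sum_congr rfl fun x _ => sum_congr rfl fun y _ => ?_
    simp only [relSign, show E w y x ↔ E w x y from ⟨h.swap_right, h.swap_right⟩]
  have hlinkable : ({x | Linkable E w x} : Finset V) = univ \ B := by ext; simp [B]
  have hBcard : (#B : ℝ) ≤ 0.278 * n := h.card_not_linkable_le w
  rw [sum_linkSign, hlinkable, sum_sum_sdiff (subset_univ B), hsymm]
  nlinarith [le_sum_sum_of_le (neg_one_le_relSign (E w)) B B, (#B).cast_nonneg (α := ℝ)]

end LinkSigns

section Weaving

variable {V : Type*} {E : V → V → V → Prop}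

/-- Interleaves two lists as `w₁ x₁ y₁ w₂ x₂ y₂ …`, one entry of the first list followed by two of
the second; leftover entries are put at the end. -/
def weave : List V → List V → List V
  | w :: ws, x :: y :: r => w :: x :: y :: weave ws r
  | ws, r => ws ++ r

theorem weave_perm (ws r : List V) : (weave ws r).Perm (ws ++ r) := by
  fun_induction weave ws r with
  | case1 w ws x y r ih =>
    refine List.Perm.cons w (((ih.cons y).cons x).trans ?_)
    simpa using (List.perm_append_comm (l₁ := [x, y]) (l₂ := ws)).append_right r
  | case2 => exact .refl _

theorem IsThreeGraph.tight_weave (h : IsThreeGraph E) {ws r : List V}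
    (hlen : r.length + 2 = 2 * ws.length) (hchain : ∀ w ∈ ws, r.IsChain (E w)) :
    Tight E (weave ws r) := by
  match ws, r with
  | [w], [] => simp [weave, Tight]
  | w :: w' :: ws, [x, y] =>
    obtain rfl : ws = [] := List.length_eq_zero_iff.1 (by simp at hlen; lia)
    have hw : E w x y := by simpa using hchain w
    have hw' : E w' x y := by simpa using hchain w'
    exact ⟨hw, h.swap_right (h.swap_left hw'), trivial⟩
  | w :: w' :: ws, x :: y :: x' :: y' :: r =>
    have hw := hchain w (by simp)
    have hw' := hchain w' (by simp)
    simp only [List.isChain_cons_cons] at hw hw'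
    have htail : Tight E (weave (w' :: ws) (x' :: y' :: r)) :=
      h.tight_weave (by simp at hlen ⊢; lia) fun v hv => by
        simpa using (hchain v (List.mem_cons_of_mem w hv)).tail.tail
    exact ⟨hw.1, h.swap_right (h.swap_left hw'.1), h.swap_left hw'.2.1, htail⟩
  | w :: w' :: ws, [x, y, z] => simp at hlen; lia

theorem exists_block_eq_weave {ws r : List V} (hlen : r.length + 2 = 2 * ws.length) (hr : r ≠ []) :
    ∃ B : Block V, B.toList = weave ws r ∧ B.a ∈ ws ∧ B.b ∈ r ∧ B.c ∈ r ∧ B.d ∈ ws := by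
  match ws, r with
  | [w], _ :: _ => simp at hlen
  | w :: w' :: ws, [x, y] =>
    obtain rfl : ws = [] := List.length_eq_zero_iff.1 (by simp at hlen; lia)
    exact ⟨⟨w, x, [], y, w'⟩, by simp [Block.toList, weave]⟩
  | w :: w' :: ws, x :: y :: x' :: y' :: r =>
    obtain ⟨B, hB, -, -, hc, hd⟩ := exists_block_eq_weave (ws := w' :: ws) (r := x' :: y' :: r)
      (by simp at hlen ⊢; lia) (by simp)
    refine ⟨⟨w, x, y :: B.a :: B.b :: B.interior, B.c, B.d⟩, ?_, by simp, by simp, ?_, ?_⟩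
    · rw [weave, ← hB]
      simp [Block.toList]
    · exact List.mem_cons_of_mem _ (List.mem_cons_of_mem _ hc)
    · exact List.mem_cons_of_mem _ hd
  | w :: w' :: ws, [x, y, z] => simp at hlen; lia

theorem exists_eq_append_of_length_eq_add {l : List V} {j k : ℕ} (hl : l.length = j + k) :
    ∃ l₁ l₂, l = l₁ ++ l₂ ∧ l₁.length = j ∧ l₂.length = k :=
  ⟨l.take j, l.drop j, (List.take_append_drop j l).symm, by simp [hl], by simp [hl]⟩

variable [Fintype V]

/-- The list underlies a linkable block. -/
def IsLinkablePath (E : V → V → V → Prop) (l : List V) : Prop :=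
  ∃ B : Block V, B.toList = l ∧ B.IsLinkable E

theorem IsThreeGraph.isLinkablePath_weave (h : IsThreeGraph E) {ws r : List V}
    (hlen : r.length + 2 = 2 * ws.length) (hr : r ≠ []) (hchain : ∀ w ∈ ws, r.IsChain (E w))
    (hlink : ∀ w ∈ ws, ∀ x ∈ r, Linkable E w x) : IsLinkablePath E (weave ws r) := by
  obtain ⟨B, hB, ha, hb, hc, hd⟩ := exists_block_eq_weave hlen hr
  refine ⟨B, hB, ?_, hlink _ ha _ hb, h.linkable_symm (hlink _ hd _ hc)⟩
  rw [hB]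
  exact h.tight_weave hlen hchain

theorem IsPacking.isFresh_of_perm {K : ℕ} {l₁ l₂ t : List V} {T : Finset (List V)}
    (hT : IsPacking K l₂.toFinsetᶜ T) (ht : t.Perm l₁) (hnodup : (l₁ ++ l₂).Nodup) :
    IsFresh ((l₁ ++ l₂).toFinsetᶜ ∪ vertices T) t := by
  obtain ⟨hnodup₁, -, hdisj⟩ := List.nodup_append'.1 hnodup
  refine ⟨ht.nodup_iff.2 hnodup₁, fun x hx hx' => ?_⟩
  have hx₁ : x ∈ l₁ := ht.mem_iff.1 hx
  obtain hx' | hx' := mem_union.1 hx'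
  · exact (mem_compl.1 hx') (List.mem_toFinset.2 (List.mem_append_left _ hx₁))
  · refine hdisj hx₁ ?_
    simpa only [mem_compl, List.mem_toFinset, not_not] using hT.notMem_of_mem_vertices hx'

theorem IsPacking.insert_append {K : ℕ} {l₁ l₂ t : List V} {T : Finset (List V)}
    (hT : IsPacking K l₂.toFinsetᶜ T) (hlen : t.length = K) (ht : t.Perm l₁)
    (hnodup : (l₁ ++ l₂).Nodup) : IsPacking K (l₁ ++ l₂).toFinsetᶜ (insert t T) := by
  refine (hT.mono (compl_subset_compl.2 ?_) subset_rfl).insert hlen (hT.isFresh_of_perm ht hnodup)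
  rw [List.toFinset_append]
  exact subset_union_right

theorem IsPacking.card_insert_append {K : ℕ} {l₁ l₂ t : List V} {T : Finset (List V)}
    (hT : IsPacking K l₂.toFinsetᶜ T) (hK : 0 < K) (hlen : t.length = K) (ht : t.Perm l₁)
    (hnodup : (l₁ ++ l₂).Nodup) : #(insert t T) = #T + 1 :=
  card_insert_of_notMem (notMem_of_isFresh_vertices hK hlen
    ((hT.isFresh_of_perm ht hnodup).mono subset_union_right))

theorem IsThreeGraph.exists_isPacking_weave (h : IsThreeGraph E) (m j : ℕ) {ws r : List V}
    (hws : ws.length = (m + 2) * j) (hr : r.length = 2 * (m + 1) * j) (hnodup : (ws ++ r).Nodup)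
    (hchain : ∀ w ∈ ws, r.IsChain (E w)) (hlink : ∀ w ∈ ws, ∀ x ∈ r, Linkable E w x) :
    ∃ T, IsPacking (3 * (m + 1) + 1) (ws ++ r).toFinsetᶜ T ∧ #T = j ∧
      ∀ l ∈ T, IsLinkablePath E l := by
  induction j generalizing ws r with
  | zero => exact ⟨∅, ⟨by simp, by simp, by simp⟩, by simp, by simp⟩
  | succ j ih =>
    obtain ⟨ws₁, ws₂, rfl, hws₁, hws₂⟩ := exists_eq_append_of_length_eq_add
      (hws.trans ((mul_add_one (m + 2) j).trans (add_comm _ _)))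
    obtain ⟨r₁, r₂, rfl, hr₁, hr₂⟩ := exists_eq_append_of_length_eq_add
      (hr.trans ((mul_add_one (2 * (m + 1)) j).trans (add_comm _ _)))
    have hperm : (ws₁ ++ ws₂ ++ (r₁ ++ r₂)).Perm ((ws₁ ++ r₁) ++ (ws₂ ++ r₂)) := by
      simpa using (List.perm_append_comm_assoc ws₂ r₁ r₂).append_left ws₁
    rw [hperm.nodup_iff] at hnodup
    obtain ⟨T, hT, rfl, hTlink⟩ := ih hws₂ hr₂ hnodup.of_append_right
      (fun w hw => (hchain w (by simp [hw])).right_of_append)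
      fun w hw x hx => hlink w (by simp [hw]) x (by simp [hx])
    have hlen : (weave ws₁ r₁).length = 3 * (m + 1) + 1 := by
      rw [(weave_perm ws₁ r₁).length_eq, List.length_append, hws₁, hr₁]
      ring
    rw [List.toFinset_eq_of_perm _ _ hperm]
    refine ⟨insert (weave ws₁ r₁) T, hT.insert_append hlen (weave_perm ws₁ r₁) hnodup,
      hT.card_insert_append (Nat.succ_pos _) hlen (weave_perm ws₁ r₁) hnodup,
      (forall_mem_insert _ _ _).2 ⟨h.isLinkablePath_weave (by lia)
        (List.ne_nil_of_length_pos (by lia)) ?_ ?_, hTlink⟩⟩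
    · exact fun w hw => (hchain w (by simp [hw])).left_of_append
    · exact fun w hw x hx => hlink w (by simp [hw]) x (by simp [hx])

end Weaving

section Exchange

theorem card_filter_ge_of_sum_ge {ι : Type*} {W : Finset ι} {F : ι → ℝ} {M a b : ℝ} (hM : 0 < M)
    (ha : 0 ≤ a) (hF : ∀ w ∈ W, F w ≤ M) (hsum : (a + b) * M * #W ≤ ∑ w ∈ W, F w) :
    b * #W ≤ #{w ∈ W | a * M ≤ F w} := by
  refine le_of_mul_le_mul_right ?_ hM
  have hle : ∑ w ∈ W, F w ≤ ∑ w ∈ W, (a * M + if a * M ≤ F w then M else 0) := by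
    refine sum_le_sum fun w hw => ?_
    split_ifs with haw
    · linarith [hF w hw, mul_nonneg ha hM.le]
    · linarith
  simp only [sum_add_distrib, ← sum_filter, sum_const, nsmul_eq_mul] at hle
  linarith

theorem exists_subset_indistinguishable {α V : Type*} (P : α → V → Prop) (R : α → V → V → Prop)
    {W : Finset α} (S : Finset V) {k : ℕ} (hW : 2 ^ #S * 2 ^ (#S * #S) * k < #W) :
    ∃ Q ⊆ W, k < #Q ∧ ∀ w ∈ Q, ∀ w' ∈ Q, (∀ x ∈ S, P w x → P w' x) ∧
      ∀ x ∈ S, ∀ y ∈ S, R w x y → R w' x y := by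
  set pattern : α → Finset V × Finset (V × V) :=
    fun w => ({x ∈ S | P w x}, {p ∈ S ×ˢ S | R w p.1 p.2}) with hpattern
  obtain ⟨z, -, hz⟩ := exists_lt_card_fiber_of_mul_lt_card_of_maps_to (s := W)
    (t := S.powerset ×ˢ (S ×ˢ S).powerset) (f := pattern) (n := k)
    (fun w _ => mem_product.2 ⟨mem_powerset.2 (filter_subset _ _),
      mem_powerset.2 (filter_subset _ _)⟩)
    (by rwa [card_product, card_powerset, card_powerset, card_product])
  refine ⟨_, filter_subset _ _, hz, fun w hw w' hw' => ?_⟩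
  have heq : pattern w = pattern w' := (mem_filter.1 hw).2.trans (mem_filter.1 hw').2.symm
  simp only [hpattern, Prod.mk.injEq, Finset.ext_iff, mem_filter, mem_product, Prod.forall] at heq
  exact ⟨fun x hx hP => ((heq.1 x).1 ⟨hx, hP⟩).2,
    fun x hx y hy hR => ((heq.2 x y).1 ⟨⟨hx, hy⟩, hR⟩).2⟩

variable {V : Type*} [Fintype V] {E : V → V → V → Prop}

/-- The link of the vertex `w`. -/
def IsThreeGraph.linkGraph (h : IsThreeGraph E) (w : V) : SimpleGraph V where
  Adj := E w
  symm := ⟨fun _ _ => h.swap_right⟩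
  loopless := ⟨fun _ hx => h.ne (h.swap_right (h.swap_left hx)) rfl⟩

theorem IsThreeGraph.exists_linkable_path (h : IsThreeGraph E) {w : V} {S : Finset V} {t : ℕ}
    (ht : (t : ℝ) ^ 2 ≤ ∑ x ∈ S, ∑ y ∈ S, linkSign E w x y) :
    ∃ P : List V, P.length = t ∧ P.Nodup ∧ P.IsChain (E w) ∧
      ∀ x ∈ P, x ∈ S ∧ Linkable E w x := by
  rw [sum_linkSign] at ht
  obtain ⟨P, hP, hlen⟩ := exists_isPathIn_of_sq_le_sum_relSign (G := h.linkGraph w) ht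
  exact ⟨P, hlen, hP.nodup, hP.isChain, fun x hx => mem_filter.1 (hP.mem x hx)⟩

-- Fifty sets of size `L` are exchanged for fifty-one paths of length `L`: many vertices of `W` have
-- the same link on `S`, and a long path in that link can be woven with any of them. Two thirds of
-- the vertices of the new paths lie in `S`, and `(2 / 3 · 51 / 50) ^ 2 < 0.47`.
theorem IsThreeGraph.exists_isPacking_of_sum_linkSign_ge (h : IsThreeGraph E) {m L : ℕ}
    (hL : L = 3 * (m + 1) + 1) {W S : Finset V} (hS : #S = 50 * L)
    (hsum : 0.55 * (50 * L : ℝ) ^ 2 * #W ≤ ∑ x ∈ S, ∑ y ∈ S, ∑ w ∈ W, linkSign E w x y)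
    (hW : 2 ^ #S * 2 ^ (#S * #S) * (#S + (m + 2) * 51 : ℕ) < 0.08 * (#W : ℝ)) :
    ∃ T, IsPacking L (W ∪ S)ᶜ T ∧ #T = 51 ∧ ∀ l ∈ T, IsLinkablePath E l := by
  have hSL : (#S : ℝ) = 50 * L := by rw [hS]; push_cast; rfl
  have hL0 : (0 : ℝ) < L := by rw [hL]; positivity
  have hlarge : 0.08 * (#W : ℝ) ≤
      #{w ∈ W | 0.47 * (50 * L : ℝ) ^ 2 ≤ ∑ x ∈ S, ∑ y ∈ S, linkSign E w x y} := by
    refine card_filter_ge_of_sum_ge (by positivity) (by norm_num) (fun w _ => ?_) ?_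
    · exact (sum_sum_le_of_le (linkSign_le_one w) S S).trans_eq (by rw [hSL]; ring)
    · rw [sum_comm]
      norm_num1 at hsum ⊢
      exact hsum.trans_eq (sum_congr rfl fun x _ => sum_comm)
  obtain ⟨Q, hQW, hQcard, hQ⟩ := exists_subset_indistinguishable (Linkable E) E S
    (mod_cast hW.trans_le hlarge)
  obtain ⟨w₀, hw₀⟩ := card_pos.1 (Nat.zero_lt_of_lt hQcard)
  obtain ⟨ws, hws, hwscard⟩ := exists_subset_card_eq
    (show (m + 2) * 51 ≤ #(Q \ S) by have := le_card_sdiff S Q; lia)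
  have hwsQ : ∀ w ∈ ws.toList, w ∈ Q := fun w hw => (mem_sdiff.1 (hws (mem_toList.1 hw))).1
  obtain ⟨P, hPlen, hPnodup, hPchain, hP⟩ := h.exists_linkable_path (t := 2 * (m + 1) * 51)
    (le_trans (by rw [hL]; push_cast; nlinarith [m.cast_nonneg (α := ℝ)])
      (mem_filter.1 (hQW hw₀)).2)
  have hdisj : ws.toList.Disjoint P := fun x hx hxP =>
    (mem_sdiff.1 (hws (mem_toList.1 hx))).2 (hP x hxP).1
  obtain ⟨T, hT, hTcard, hTlink⟩ := h.exists_isPacking_weave m 51 (ws := ws.toList) (r := P)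
    (by rw [length_toList, hwscard]) hPlen (ws.nodup_toList.append hPnodup hdisj)
    (fun w hw => hPchain.imp_of_mem_imp fun x y hx hy =>
      (hQ w₀ hw₀ w (hwsQ w hw)).2 x (hP x hx).1 y (hP y hy).1)
    fun w hw x hx => (hQ w₀ hw₀ w (hwsQ w hw)).1 x (hP x hx).1 (hP x hx).2
  refine ⟨T, hL ▸ hT.mono (compl_subset_compl.2 fun x hx => ?_) subset_rfl, hTcard, hTlink⟩
  obtain hx | hx := List.mem_append.1 (List.mem_toFinset.1 hx)
  · exact mem_union_left _ (filter_subset _ _ (hQW (hwsQ x hx)))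
  · exact mem_union_right _ (hP x hx).1

end Exchange

section Cover

variable {V : Type*} {K : ℕ} {U : Finset V} {T : Finset (List V)}

theorem IsPacking.injOn_toFinset (hK : 0 < K) (hT : IsPacking K U T) :
    Set.InjOn List.toFinset (T : Set (List V)) := by
  intro l hl l' hl' heq
  by_contra hne
  obtain ⟨x, hx⟩ := List.exists_mem_of_length_pos (hT.length_eq l hl ▸ hK)
  exact hT.disjoint l hl l' hl' hne hx (List.mem_toFinset.1 (heq ▸ List.mem_toFinset.2 hx))

theorem IsPacking.isTileFamily (hT : IsPacking K U T) : IsTileFamily K (T.image List.toFinset) := by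
  constructor
  · simp only [forall_mem_image]
    intro l hl
    rw [List.toFinset_card_of_nodup (hT.isFresh l hl).1, hT.length_eq l hl]
  · rw [coe_image]
    rintro _ ⟨l, hl, rfl⟩ _ ⟨l', hl', rfl⟩ hne
    exact List.disjoint_toFinset_iff_disjoint.2
      (hT.disjoint l hl l' hl' fun heq => hne (congrArg _ heq))

theorem biUnion_image_toFinset (T : Finset (List V)) :
    (T.image List.toFinset).biUnion id = vertices T :=
  image_biUnion

theorem IsTileFamily.union_of_disjoint {L : ℕ} {C D : Finset (Finset V)} (hC : IsTileFamily L C)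
    (hD : IsTileFamily L D) (hdisj : Disjoint (C.biUnion id) (D.biUnion id)) :
    IsTileFamily L (C ∪ D) := by
  have hCD : ∀ A ∈ C, ∀ B ∈ D, Disjoint A B := fun A hA B hB =>
    hdisj.mono (subset_biUnion_of_mem id hA) (subset_biUnion_of_mem id hB)
  refine ⟨fun A hA => (mem_union.1 hA).elim (hC.card_eq A) (hD.card_eq A), ?_⟩
  rw [coe_union, Set.pairwiseDisjoint_union]
  exact ⟨hC.pairwiseDisjoint, hD.pairwiseDisjoint, fun A hA B hB _ => hCD A hA B hB⟩

theorem IsPacking.exists_isTileFamily [Fintype V] (hK : 0 < K) (hT : IsPacking K U T) :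
    ∃ C, IsTileFamily K C ∧ T.image List.toFinset ⊆ C ∧ C.biUnion id ⊆ Uᶜ ∧
      #(C.biUnion id)ᶜ ≤ #U + K := by
  obtain ⟨D, hD, hDsub, hDcard⟩ := IsTileFamily.exists_of_finset hK (Uᶜ \ vertices T)
  have hDsub' : D.biUnion id ⊆ Uᶜ \ vertices T := biUnion_subset.2 hDsub
  refine ⟨T.image List.toFinset ∪ D, hT.isTileFamily.union_of_disjoint hD ?_, subset_union_left,
    ?_, ?_⟩
  · rw [biUnion_image_toFinset]
    exact disjoint_sdiff.mono_right hDsub'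
  · rw [union_biUnion, biUnion_image_toFinset]
    exact union_subset (fun x hx => mem_compl.2 (hT.notMem_of_mem_vertices hx))
      (hDsub'.trans sdiff_subset)
  · rw [union_biUnion, biUnion_image_toFinset]
    refine (card_le_card fun x hx => ?_).trans
      ((card_union_le U _).trans (Nat.add_le_add_left hDcard _))
    simp only [mem_compl, mem_union, mem_sdiff] at hx ⊢
    tauto

theorem IsPacking.exists_card_lt [Fintype V] (hK : 0 < K) (hT : IsPacking K U T)
    {C D : Finset (Finset V)} (hC : IsTileFamily K C) (hTC : T.image List.toFinset ⊆ C)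
    (hCU : C.biUnion id ⊆ Uᶜ) (hD : D ⊆ C) {T' : Finset (List V)}
    (hT' : IsPacking K ((Uᶜ \ vertices T) ∪ D.biUnion id)ᶜ T') (hcard : #D < #T') :
    ∃ T₁ ⊆ T, IsPacking K U (T₁ ∪ T') ∧ #T < #(T₁ ∪ T') := by
  set T₁ := {l ∈ T | l.toFinset ∉ D}
  have hT₁T : T₁ ⊆ T := filter_subset _ _
  have hmem' : ∀ x ∈ vertices T', x ∈ Uᶜ \ vertices T ∨ x ∈ D.biUnion id := fun x hx => by
    simpa only [mem_compl, mem_union, not_not] using hT'.notMem_of_mem_vertices hx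
  have hdisj : ∀ x ∈ vertices T₁, x ∉ vertices T' := by
    intro x hx hx'
    obtain ⟨l, hl, hxl⟩ := mem_vertices.1 hx
    obtain hxW | hxD := hmem' x hx'
    · exact (mem_sdiff.1 hxW).2 (mem_vertices.2 ⟨l, hT₁T hl, hxl⟩)
    · obtain ⟨A, hA, hxA⟩ := mem_biUnion.1 hxD
      refine disjoint_left.1 (hC.pairwiseDisjoint (hTC (mem_image_of_mem _ (hT₁T hl))) (hD hA)
        fun heq => (mem_filter.1 hl).2 (heq ▸ hA)) (List.mem_toFinset.2 hxl) hxA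
  have hcard₁ : #T ≤ #T₁ + #D := by
    rw [← card_filter_add_card_filter_not (s := T) fun l => l.toFinset ∈ D, add_comm #T₁]
    refine Nat.add_le_add_right (card_le_card_of_injOn List.toFinset (fun l hl => ?_)
      ((hT.injOn_toFinset hK).mono (coe_subset.2 (filter_subset _ _)))) _
    exact (mem_filter.1 hl).2
  refine ⟨T₁, hT₁T, (hT.mono subset_rfl hT₁T).union (hT'.mono ?_ subset_rfl) hdisj, ?_⟩
  · rw [subset_compl_comm]
    exact union_subset sdiff_subset ((biUnion_subset_biUnion_of_subset_left id hD).trans hCU)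
  · rw [(hT.mono subset_rfl hT₁T).card_union hK hdisj]
    lia

theorem IsDense.exists_isPacking_card_lt [Fintype V] {E : V → V → V → Prop} (h : IsDense E)
    {m L : ℕ} (hL : L = 3 * (m + 1) + 1) (hLn : (L : ℝ) ≤ 0.001 * Fintype.card V)
    (hU : (#U : ℝ) ≤ 0.001 * Fintype.card V) (hT : IsPacking L U T)
    (hTlink : ∀ l ∈ T, IsLinkablePath E l)
    (hW : 2 ^ (50 * L) * 2 ^ (50 * L * (50 * L)) * (50 * L + (m + 2) * 51 : ℕ) <
      0.08 * (#(Uᶜ \ vertices T) : ℝ)) :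
    ∃ T', IsPacking L U T' ∧ (∀ l ∈ T', IsLinkablePath E l) ∧ #T < #T' := by
  set W := Uᶜ \ vertices T with hWdef
  have hL0 : 0 < L := hL ▸ Nat.succ_pos _
  have hn : 0 < Fintype.card V := by
    have : (0 : ℝ) < L := mod_cast hL0
    exact_mod_cast (by linarith : (0 : ℝ) < Fintype.card V)
  obtain ⟨C, hC, hTC, hCU, hmiss⟩ := hT.exists_isTileFamily hL0
  rify at hmiss
  obtain ⟨D, hDC, hDcard, hDsum⟩ := hC.exists_subset_sum_ge
    (g := fun x y => ∑ w ∈ W, linkSign E w x y) (ω := #W)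
    (fun x y => by simpa using sum_le_card_nsmul W _ 1 fun w _ => linkSign_le_one w x y)
    (fun x y => by simpa using card_nsmul_le_sum W _ (-1) fun w _ => neg_one_le_linkSign w x y)
    (by positivity)
    (by
      have hswap : ∑ x, ∑ y, ∑ w ∈ W, linkSign E w x y = ∑ w ∈ W, ∑ x, ∑ y, linkSign E w x y := by
        rw [sum_comm (s := W)]
        exact sum_congr rfl fun x _ => sum_comm
      rw [hswap, mul_comm, ← nsmul_eq_mul]
      exact card_nsmul_le_sum _ _ _ fun w _ => h.sum_linkSign_ge w)
    hLn (by linarith) hn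
  have hDS : #(D.biUnion id) = 50 * L := by rw [(hC.mono hDC).card_biUnion, hDcard]
  obtain ⟨T', hT', hT'card, hT'link⟩ := h.exists_isPacking_of_sum_linkSign_ge hL hDS hDsum
    (by rwa [hDS])
  obtain ⟨T₁, hT₁, hpacking, hlt⟩ := hT.exists_card_lt hL0 hC hTC hCU hDC hT' (by lia)
  exact ⟨_, hpacking, fun l hl => (mem_union.1 hl).elim (hTlink l <| hT₁ ·) (hT'link l), hlt⟩

universe u

theorem exists_isPacking_isLinkablePath (m : ℕ) {α : ℝ} (hα : 0 < α) :
    ∃ N : ℕ, ∀ (V : Type u) [Fintype V] (E : V → V → V → Prop), IsDense E →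
      N ≤ Fintype.card V → ∀ U : Finset V, (#U : ℝ) ≤ 0.001 * Fintype.card V →
      ∃ T, IsPacking (3 * (m + 1) + 1) U T ∧ (∀ l ∈ T, IsLinkablePath E l) ∧
        (#(Uᶜ \ vertices T) : ℝ) ≤ α * Fintype.card V := by
  set L := 3 * (m + 1) + 1 with hL
  set Z : ℕ := 2 ^ (50 * L) * 2 ^ (50 * L * (50 * L)) * (50 * L + (m + 2) * 51) with hZ
  refine ⟨max (⌊Z / (0.08 * α)⌋₊ + 1) (1000 * L), fun V _ E h hN U hU => ?_⟩
  obtain ⟨hZN, hLN⟩ := max_le_iff.1 hN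
  have hZn : Z < 0.08 * (α * Fintype.card V) := by
    have := Nat.lt_of_floor_lt hZN
    rw [div_lt_iff₀ (by positivity)] at this
    linarith
  have hLn : (L : ℝ) ≤ 0.001 * Fintype.card V := by
    rify at hLN
    linarith
  obtain ⟨T, hT, hmax⟩ := exists_max_image
    {T ∈ (lists V L).powerset | IsPacking L U T ∧ ∀ l ∈ T, IsLinkablePath E l} card
    ⟨∅, mem_filter.2 ⟨empty_mem_powerset _, ⟨by simp, by simp, by simp⟩, by simp⟩⟩
  obtain ⟨-, hT, hTlink⟩ := mem_filter.1 hT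
  refine ⟨T, hT, hTlink, le_of_not_gt fun hlt => ?_⟩
  obtain ⟨T', hT', hT'link, hcard⟩ := h.exists_isPacking_card_lt hL hLn hU hT hTlink (by
    refine lt_of_eq_of_lt ?_ (hZn.trans_le (by gcongr))
    rw [hZ]
    push_cast
    rfl)
  refine (hmax T' (mem_filter.2 ⟨mem_powerset.2 fun l hl => ?_, hT', hT'link⟩)).not_gt hcard
  exact mem_lists.2 (hT'.length_eq l hl)

end Cover

section Joining

variable {V : Type*} {E : V → V → V → Prop}

theorem Tight.link {l y r : List V} {a b c d : V} (hl : Tight E (l ++ [c, d]))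
    (hy : Tight E (c :: d :: (y ++ [a, b]))) (hr : Tight E (a :: b :: r)) :
    Tight E (l ++ c :: d :: (y ++ a :: b :: r)) :=
  hl.glue (Tight.glue (l := c :: d :: y) hy hr)

namespace Block

theorem toList_injective : Function.Injective (toList : Block V → List V) := by
  rintro ⟨a, b, l, c, d⟩ ⟨a', b', l', c', d'⟩ h
  simp only [toList, List.cons.injEq] at h
  obtain ⟨rfl, rfl, h⟩ := h
  obtain ⟨rfl, hcd⟩ := List.append_inj' h rfl
  simp_all

/-- The block that runs through `B`, then `y`, then `C`. -/
def join (B : Block V) (y : List V) (C : Block V) : Block V :=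
  ⟨B.a, B.b, B.interior ++ B.c :: B.d :: (y ++ C.a :: C.b :: C.interior), C.c, C.d⟩

theorem toList_join (B : Block V) (y : List V) (C : Block V) :
    (B.join y C).toList = B.toList ++ (y ++ C.toList) := by
  simp [toList, join]

variable {B C : Block V} {X X' y : List V}

theorem absorbs_nil (hB : Tight E B.toList) : B.Absorbs E [] :=
  ⟨B.interior, hB, .refl _⟩

theorem Absorbs.perm (hB : B.Absorbs E X) (hX : X.Perm X') : B.Absorbs E X' := by
  obtain ⟨l, hl, hperm⟩ := hB
  exact ⟨l, hl, hperm.trans (hX.append_right _)⟩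

theorem Absorbs.join (hB : B.Absorbs E X) (hy : Tight E (B.c :: B.d :: (y ++ [C.a, C.b])))
    (hC : C.Absorbs E X') : (B.join y C).Absorbs E (X ++ X') := by
  obtain ⟨l, hl, hlX⟩ := hB
  obtain ⟨l', hl', hlX'⟩ := hC
  refine ⟨l ++ B.c :: B.d :: (y ++ C.a :: C.b :: l'), ?_, ?_⟩
  · simpa [Block.join] using Tight.link (l := B.a :: B.b :: l) hl hy hl'
  · rw [List.perm_iff_count] at *
    intro x
    have hx := hlX x
    have hx' := hlX' x
    simp only [Block.join, List.count_append, List.count_cons] at hx hx' ⊢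
    lia

theorem Absorbs.exists_tight_cycle (hB : B.Absorbs E X)
    (hy : Tight E (B.c :: B.d :: (y ++ [B.a, B.b]))) :
    ∃ a b r, Tight E (a :: b :: (r ++ [a, b])) ∧ (a :: b :: r).Perm (X ++ (B.toList ++ y)) := by
  obtain ⟨l, hl, hperm⟩ := hB
  refine ⟨B.a, B.b, l ++ B.c :: B.d :: y, ?_, ?_⟩
  · simpa using Tight.glue (l := B.a :: B.b :: l) hl hy
  · rw [List.perm_iff_count] at *
    intro x
    have hx := hperm x
    simp only [toList, List.count_append, List.count_cons, List.count_nil] at hx ⊢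
    lia

variable [Fintype V]

theorem IsLinkable.join (hB : B.IsLinkable E) (hy : Tight E (B.c :: B.d :: (y ++ [C.a, C.b])))
    (hC : C.IsLinkable E) : (B.join y C).IsLinkable E := by
  refine ⟨?_, hB.2.1, hC.2.2⟩
  simpa [Block.join, toList] using Tight.link (l := B.a :: B.b :: B.interior) hB.1 hy hC.1

end Block

variable [Fintype V]

/-- The block `C` arises from `C₀` by successively putting the linkable blocks of a list in front
of it. The second list collects the vertices of the links used in between. -/
inductive Joined (E : V → V → V → Prop) (C₀ : Block V) :
    List (Block V) → List V → Block V → Prop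
  | nil : Joined E C₀ [] [] C₀
  | cons {Bs : List (Block V)} {Y : List V} {C B : Block V} {y : List V}
      (hC : Joined E C₀ Bs Y C) (hB : B.IsLinkable E)
      (hy : Tight E (B.c :: B.d :: (y ++ [C.a, C.b]))) :
      Joined E C₀ (B :: Bs) (y ++ Y) (B.join y C)

namespace Joined

variable {C₀ C : Block V} {Bs : List (Block V)} {Y : List V}

theorem isLinkable (hC : Joined E C₀ Bs Y C) (hC₀ : C₀.IsLinkable E) : C.IsLinkable E := by
  induction hC with
  | nil => exact hC₀
  | cons _ hB hy ih => exact hB.join hy ih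

theorem toList_perm (hC : Joined E C₀ Bs Y C) :
    C.toList.Perm ((Bs.flatMap Block.toList ++ C₀.toList) ++ Y) := by
  induction hC with
  | nil => simp
  | cons _ _ _ ih =>
    rw [List.perm_iff_count] at *
    intro x
    have hx := ih x
    simp only [Block.toList_join, List.flatMap_cons, List.count_append] at hx ⊢
    lia

theorem absorbs (hC : Joined E C₀ Bs Y C) {X X₀ : List V} (hC₀ : C₀.Absorbs E X₀)
    (hX : ∀ v ∈ X, X.length ≤ Bs.countP (Block.Absorbs E [v] ·)) : C.Absorbs E (X ++ X₀) := by
  induction hC generalizing X with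
  | nil =>
    obtain rfl : X = [] := List.eq_nil_iff_forall_not_mem.2 fun v hv => by
      simpa [List.ne_nil_of_mem hv] using hX v hv
    exact hC₀
  | @cons Bs _ C B y _ hB hy ih =>
    by_cases hv : ∃ v ∈ X, B.Absorbs E [v]
    · obtain ⟨v, hvX, hBv⟩ := hv
      have hX' : ∀ w ∈ X.erase v, (X.erase v).length ≤ Bs.countP (Block.Absorbs E [w] ·) := by
        intro w hw
        have hcount := hX w (List.mem_of_mem_erase hw)
        rw [List.countP_cons] at hcount
        rw [List.length_erase_of_mem hvX, Nat.sub_le_iff_le_add]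
        exact hcount.trans (Nat.add_le_add_left (by split_ifs <;> simp) _)
      exact (hBv.join hy (ih hX')).perm ((List.perm_cons_erase hvX).symm.append_right X₀)
    · push Not at hv
      refine (Block.absorbs_nil hB.1).join hy (ih fun v hvX => ?_)
      simpa [List.countP_cons, hv v hvX] using hX v hvX

end Joined

end Joining

section Reservoirs

variable {V : Type*}

theorem IsPacking.exists_isFresh_of_card_lt {K : ℕ} {U₀ : Finset V} {T : Finset (List V)}
    (hT : IsPacking K U₀ T) {F : List V → Prop} {U : Finset V} (hU : #U < #{l ∈ T | F l}) :
    ∃ l ∈ T, F l ∧ IsFresh U l := by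
  by_contra! hnone
  have hhit : ∀ l ∈ ({l ∈ T | F l} : Finset (List V)), ∃ x ∈ U, x ∈ l := by
    intro l hl
    obtain ⟨hlT, hlF⟩ := mem_filter.1 hl
    by_contra! hmiss
    exact hnone l hlT hlF ⟨(hT.isFresh l hlT).1, fun x hx hxU => hmiss x hxU hx⟩
  refine hU.not_ge (card_le_card_of_forall_subsingleton (fun l x => x ∈ l) hhit ?_)
  intro x _ l hl l' hl'
  by_contra hne
  exact hT.disjoint l (mem_filter.1 hl.1).1 l' (mem_filter.1 hl'.1).1 hne hl.2 hl'.2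

variable [Fintype V] {E : V → V → V → Prop} {Z : Finset V} {u : ℝ}

/-- After the removal of any `u` vertices, the set `Z` still contains a link between any two
linkable pairs. -/
def IsReservoir (E : V → V → V → Prop) (Z : Finset V) (u : ℝ) : Prop :=
  ∀ a b c d, Linkable E a b → Linkable E c d → ∀ U : Finset V, (#U : ℝ) ≤ u →
    ∃ y ∈ links E 16 a b c d, IsFresh U y ∧ ∀ x ∈ y, x ∈ Z

theorem IsDense.isReservoir_univ (h : IsDense E)
    (hu : 16 * (u + 16) ≤ linkDensity / 2 * Fintype.card V) : IsReservoir E univ u := by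
  intro a b c d hab hcd U hU
  have hn := natCast_card_pos a
  have : Nonempty V := ⟨a⟩
  by_contra! hnone
  have hlinks : links E 16 a b c d ⊆ {l ∈ lists V 16 | ¬ IsFresh U l} := fun y hy =>
    mem_filter.2 ⟨(mem_filter.1 hy).1, fun hfresh => by simpa using hnone y hy hfresh⟩
  have hle : linkDensity * (Fintype.card V : ℝ) ^ 16 ≤
      linkDensity / 2 * (Fintype.card V : ℝ) ^ 16 :=
    calc linkDensity * (Fintype.card V : ℝ) ^ 16
        ≤ #(links E 16 a b c d) := h.card_links_ge hab hcd
      _ ≤ #{l ∈ lists V 16 | ¬ IsFresh U l} := mod_cast card_le_card hlinks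
      _ ≤ linkDensity / 2 * (Fintype.card V : ℝ) ^ 16 :=
          card_not_isFresh_le (le_trans (by push_cast; gcongr) hu)
  have hpos := mul_pos linkDensity_pos (pow_pos hn 16)
  linarith

theorem IsReservoir.exists_joined (hZ : IsReservoir E Z u) {C₀ : Block V}
    (hC₀ : C₀.IsLinkable E) (U : Finset V) {Bs : List (Block V)} (hBs : ∀ B ∈ Bs, B.IsLinkable E)
    (hu : #U + 16 * Bs.length ≤ u) :
    ∃ Y C, Joined E C₀ Bs Y C ∧ IsFresh U Y ∧ (∀ x ∈ Y, x ∈ Z) ∧ Y.length = 16 * Bs.length := by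
  induction Bs with
  | nil => exact ⟨[], C₀, .nil, by simp [IsFresh], by simp, rfl⟩
  | cons B Bs ih =>
    obtain ⟨hB, hBs⟩ := List.forall_mem_cons.1 hBs
    simp only [List.length_cons, Nat.cast_add, Nat.cast_one] at hu
    obtain ⟨Y, C, hC, hY, hYZ, hYlen⟩ := ih hBs (by linarith)
    have hcard : (#(U ∪ Y.toFinset) : ℝ) ≤ #U + 16 * Bs.length := by
      exact_mod_cast (card_union_le _ _).trans
        (Nat.add_le_add_left ((List.toFinset_card_le Y).trans_eq hYlen) _)
    obtain ⟨y, hy, hyfresh, hyZ⟩ := hZ B.c B.d C.a C.b hB.2.2 (hC.isLinkable hC₀).2.1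
      (U ∪ Y.toFinset) (by linarith)
    obtain ⟨hylen, hytight⟩ := mem_filter.1 hy
    refine ⟨y ++ Y, B.join y C, .cons hC hB hytight, ⟨?_, ?_⟩, ?_, ?_⟩
    · refine hyfresh.1.append hY.1 fun x hx hx' => hyfresh.2 x hx ?_
      exact mem_union_right _ (List.mem_toFinset.2 hx')
    · exact List.forall_mem_append.2 ⟨(hyfresh.mono subset_union_left).2, hY.2⟩
    · exact List.forall_mem_append.2 ⟨hyZ, hYZ⟩
    · rw [List.length_append, mem_lists.1 hylen, hYlen, List.length_cons]
      ring

universe w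

theorem exists_isReservoir {μ : ℝ} (hμ : 0 < μ) :
    ∃ N : ℕ, ∀ (V : Type w) [Fintype V] (E : V → V → V → Prop), IsDense E →
      N ≤ Fintype.card V → ∀ U : Finset V,
      16 * (#U + 16 * (μ * Fintype.card V) + 16) ≤ linkDensity / 2 * Fintype.card V →
      ∃ Z : Finset V, (#Z : ℝ) ≤ 16 * (μ * Fintype.card V) ∧ (∀ x ∈ Z, x ∉ U) ∧
        IsReservoir E Z (linkDensity * μ / 16 * Fintype.card V) := by
  obtain ⟨N, hN⟩ := exists_isPacking (K := 16) (by norm_num) linkDensity_pos linkDensity_le_one hμ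
  refine ⟨N, fun V _ E h hV U hU => ?_⟩
  set J : Finset ((V × V) × V × V) := {p | Linkable E p.1.1 p.1.2 ∧ Linkable E p.2.1 p.2.2}
  obtain ⟨T, hT, hTcard, hTlinks⟩ := hN V hV _ J
    (fun p l => Tight E (p.1.1 :: p.1.2 :: (l ++ [p.2.1, p.2.2]))) U
    ((card_le_univ J).trans_eq (by simp only [Fintype.card_prod]; ring))
    (fun p hp => h.card_links_ge (mem_filter.1 hp).2.1 (mem_filter.1 hp).2.2) (mod_cast hU)
  refine ⟨vertices T, ?_, fun x => hT.notMem_of_mem_vertices, fun a b c d hab hcd U' hU' => ?_⟩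
  · have : (#(vertices T) : ℝ) ≤ 16 * #T := mod_cast hT.card_vertices_le
    linarith
  · have hmany := hTlinks ((a, b), c, d) (mem_filter.2 ⟨mem_univ _, hab, hcd⟩)
    have hpos := mul_pos (mul_pos linkDensity_pos hμ) (natCast_card_pos a)
    obtain ⟨y, hyT, hy, hyfresh⟩ := hT.exists_isFresh_of_card_lt (U := U')
      (Nat.cast_lt.1 ((by linarith : (#U' : ℝ) < _).trans_le hmany))
    exact ⟨y, mem_filter.2 ⟨mem_lists.2 (hT.length_eq y hyT), hy⟩, hyfresh,
      fun x hx => mem_vertices.2 ⟨y, hyT, hx⟩⟩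

end Reservoirs

section AbsorbingPath

variable {V : Type*} {E : V → V → V → Prop} {K : ℕ} {U : Finset V} {T : Finset (List V)}

theorem IsPacking.nodup_flatten (hT : IsPacking K U T) : T.toList.flatten.Nodup := by
  refine List.nodup_flatten.2 ⟨fun l hl => (hT.isFresh l (mem_toList.1 hl)).1, ?_⟩
  exact T.nodup_toList.imp_of_mem fun hl hl' =>
    hT.disjoint _ (mem_toList.1 hl) _ (mem_toList.1 hl')

theorem mem_flatten_toList {x : V} : x ∈ T.toList.flatten ↔ x ∈ vertices T := by
  simp [mem_vertices]

theorem IsPacking.length_flatten (hT : IsPacking K U T) : T.toList.flatten.length = K * #T := by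
  rw [List.length_flatten, List.sum_eq_card_nsmul _ K]
  · simp [mul_comm]
  · simpa using hT.length_eq

variable [Fintype V]

theorem IsPacking.mul_card_le (hT : IsPacking K U T) : K * #T ≤ Fintype.card V :=
  hT.length_flatten ▸ hT.nodup_flatten.length_le_card

theorem exists_blocks_of_isLinkablePath {L : List (List V)} (hL : ∀ l ∈ L, IsLinkablePath E l) :
    ∃ Bs : List (Block V), Bs.map Block.toList = L ∧ ∀ B ∈ Bs, B.IsLinkable E := by
  induction L with
  | nil => exact ⟨[], by simp⟩
  | cons l L ih =>
    obtain ⟨⟨B, hBl, hB⟩, hL⟩ := List.forall_mem_cons.1 hL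
    obtain ⟨Bs, hBsL, hBs⟩ := ih hL
    exact ⟨B :: Bs, by rw [List.map_cons, hBl, hBsL], List.forall_mem_cons.2 ⟨hB, hBs⟩⟩

theorem IsAbsorber.isLinkablePath {v : V} {l : List V} (hl : IsAbsorber E v l) :
    IsLinkablePath E l := by
  obtain ⟨B, hBl, hB, -⟩ := hl
  exact ⟨B, hBl, hB⟩

theorem card_isAbsorber_le_countP {Bs : List (Block V)} (hBs : Bs.map Block.toList = T.toList)
    (v : V) : #{l ∈ T | IsAbsorber E v l} ≤ Bs.countP (Block.Absorbs E [v] ·) := by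
  have hcard : #{l ∈ T | IsAbsorber E v l} = T.toList.countP (IsAbsorber E v ·) := by
    rw [← Multiset.coe_countP, coe_toList, Multiset.countP_eq_card_filter]
    rfl
  rw [hcard, ← hBs, List.countP_map]
  refine List.countP_mono_left fun B _ hB => ?_
  obtain ⟨B', hB', -, habs⟩ := of_decide_eq_true hB
  exact decide_eq_true (Block.toList_injective hB' ▸ habs)

theorem Joined.absorbs_of_card_isAbsorber {C₀ C : Block V} {Bs : List (Block V)} {Y : List V}
    (hC : Joined E C₀ Bs Y C) (hC₀ : C₀.IsLinkable E)
    (hT : (C₀ :: Bs).map Block.toList = T.toList) {X : List V}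
    (hX : ∀ v, X.length + 1 ≤ #{l ∈ T | IsAbsorber E v l}) : C.Absorbs E X := by
  suffices C.Absorbs E (X ++ []) by rwa [List.append_nil] at this
  refine hC.absorbs (Block.absorbs_nil hC₀.1) fun v _ => ?_
  have hcount := (hX v).trans (card_isAbsorber_le_countP hT v)
  rw [List.countP_cons] at hcount
  split_ifs at hcount
  · exact Nat.le_of_add_le_add_right hcount
  · exact Nat.le_of_succ_le hcount

theorem IsReservoir.exists_absorbing_block {u : ℝ} (huniv : IsReservoir E univ u)
    (hT : IsPacking K U T) (hT_nonempty : T.Nonempty) (hpath : ∀ l ∈ T, IsLinkablePath E l)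
    (hu : (K + 16) * #T ≤ u) :
    ∃ C : Block V, C.IsLinkable E ∧ C.toList.Nodup ∧ (C.toList.length : ℝ) ≤ u ∧
      ∀ X : List V, (∀ v, X.length + 1 ≤ #{l ∈ T | IsAbsorber E v l}) → C.Absorbs E X := by
  obtain ⟨Bs, hBsT, hBs⟩ := exists_blocks_of_isLinkablePath fun l hl => hpath l (mem_toList.1 hl)
  obtain ⟨C₀, Bs, rfl⟩ := List.exists_cons_of_ne_nil (l := Bs) fun h => by
    simp [h, eq_comm, hT_nonempty.ne_empty] at hBsT
  obtain ⟨hC₀, hBs⟩ := List.forall_mem_cons.1 hBs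
  have hlen : Bs.length + 1 = #T := by simpa using congrArg List.length hBsT
  have hvert : (#(vertices T) : ℝ) ≤ K * #T := mod_cast hT.card_vertices_le
  obtain ⟨Y, C, hC, hY, -, hYlen⟩ := huniv.exists_joined hC₀ (vertices T) hBs (by
    rify at hlen
    linarith)
  have hperm : C.toList.Perm (T.toList.flatten ++ Y) := by
    rw [← hBsT, ← List.flatMap_def, List.flatMap_cons]
    exact hC.toList_perm.trans (List.perm_append_comm.append_right Y)
  refine ⟨C, hC.isLinkable hC₀, ?_, ?_, fun X => hC.absorbs_of_card_isAbsorber hC₀ hBsT⟩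
  · refine hperm.nodup_iff.2 (hT.nodup_flatten.append hY.1 fun x hx hxY => ?_)
    exact hY.2 x hxY (mem_flatten_toList.1 hx)
  · rw [hperm.length_eq, List.length_append, hT.length_flatten, hYlen]
    refine le_trans ?_ hu
    rify at hlen
    push_cast
    linarith

universe w

theorem exists_isPacking_isAbsorber {μ : ℝ} (hμ : 0 < μ)
    (hμ_le : 100000 * μ ≤ absorberDensity) :
    ∃ N : ℕ, ∀ (V : Type w) [Fintype V] (E : V → V → V → Prop), IsDense E →
      N ≤ Fintype.card V → ∃ T, IsPacking 25 ∅ T ∧ (∀ l ∈ T, IsLinkablePath E l) ∧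
        #T ≤ μ * Fintype.card V ∧
        ∀ v, absorberDensity * μ / 8 * Fintype.card V ≤ #{l ∈ T | IsAbsorber E v l} := by
  obtain ⟨N, hN⟩ := exists_isPacking (K := 25) (by norm_num) absorberDensity_pos
    (absorberDensity_le_linkDensity.trans linkDensity_le_one) hμ
  refine ⟨max N ⌈100000 / absorberDensity⌉₊, fun V _ E h hV => ?_⟩
  obtain ⟨hNV, hlarge⟩ := max_le_iff.1 hV
  rw [Nat.ceil_le, div_le_iff₀' absorberDensity_pos] at hlarge
  have hμn := mul_le_mul_of_nonneg_right hμ_le (Nat.cast_nonneg' (Fintype.card V))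
  obtain ⟨T, hT, hTcard, hmany⟩ := hN V hNV V univ (IsAbsorber E) ∅
    (Nat.le_self_pow (by norm_num) _) (fun v _ => h.card_isAbsorber_ge v)
    (by rw [card_empty]; push_cast; linarith)
  refine ⟨({l ∈ T | IsLinkablePath E l} : Finset (List V)),
    hT.mono (subset_refl ∅) (filter_subset _ _), fun l hl => (mem_filter.1 hl).2,
    le_trans (mod_cast card_filter_le _ _) hTcard, fun v => (hmany v (mem_univ v)).trans ?_⟩
  refine Nat.cast_le.2 (card_le_card fun l hl => ?_)
  obtain ⟨hlT, hl⟩ := mem_filter.1 hl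
  exact mem_filter.2 ⟨mem_filter.2 ⟨hlT, hl.isLinkablePath⟩, hl⟩

theorem exists_absorbing_block {μ : ℝ} (hμ : 0 < μ) (hμ_le : 100000 * μ ≤ absorberDensity) :
    ∃ N : ℕ, ∀ (V : Type w) [Fintype V] (E : V → V → V → Prop), IsDense E →
      N ≤ Fintype.card V → ∃ C : Block V, C.IsLinkable E ∧ C.toList.Nodup ∧
        C.toList.length ≤ 41 * (μ * Fintype.card V) ∧
        ∀ X : List V, X.length + 1 ≤ absorberDensity * μ / 8 * Fintype.card V →
          C.Absorbs E X := by
  obtain ⟨N, hN⟩ := exists_isPacking_isAbsorber.{w} hμ hμ_le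
  refine ⟨max N ⌈100000 / absorberDensity⌉₊, fun V _ E h hV => ?_⟩
  obtain ⟨hNV, hlarge⟩ := max_le_iff.1 hV
  rw [Nat.ceil_le, div_le_iff₀' absorberDensity_pos] at hlarge
  have hμn := mul_le_mul_of_nonneg_right hμ_le (Nat.cast_nonneg' (Fintype.card V))
  have hdensity := mul_le_mul_of_nonneg_right absorberDensity_le_linkDensity
    (Nat.cast_nonneg' (Fintype.card V))
  have hn : (0 : ℝ) < Fintype.card V :=
    pos_of_mul_pos_right (lt_of_lt_of_le (by norm_num) hlarge) absorberDensity_pos.le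
  obtain ⟨T, hT, hpath, hTcard, hmany⟩ := hN V E h hNV
  have hT_nonempty : T.Nonempty := by
    obtain ⟨v⟩ := Fintype.card_pos_iff.1 (Nat.cast_pos.1 hn)
    have hc : 0 < absorberDensity * μ / 8 := by linarith [mul_pos absorberDensity_pos hμ]
    have hpos : (0 : ℝ) < #{l ∈ T | IsAbsorber E v l} := (mul_pos hc hn).trans_le (hmany v)
    exact (card_pos.1 (Nat.cast_pos.1 hpos)).mono (filter_subset _ _)
  obtain ⟨C, hC, hCnodup, hClen, habs⟩ := IsReservoir.exists_absorbing_block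
    (h.isReservoir_univ (u := 41 * (μ * Fintype.card V)) (by linarith)) hT hT_nonempty hpath
    (by push_cast; linarith)
  exact ⟨C, hC, hCnodup, hClen, fun X hX => habs X fun v => mod_cast hX.trans (hmany v)⟩

end AbsorbingPath

section HamiltonCycle

variable {V : Type*} [Fintype V] {E : V → V → V → Prop}

theorem Block.Absorbs.exists_tight_hamiltonian_cycle {C : Block V} {y X : List V}
    (hC : C.Absorbs E X) (hy : Tight E (C.c :: C.d :: (y ++ [C.a, C.b])))
    (hnodup : (C.toList ++ y).Nodup) (hX : X = (C.toList ++ y).toFinsetᶜ.toList) :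
    ∃ a b r, Tight E (a :: b :: (r ++ [a, b])) ∧ (a :: b :: r).Nodup ∧ ∀ x, x ∈ a :: b :: r := by
  obtain ⟨a, b, r, htight, hperm⟩ := hC.exists_tight_cycle hy
  refine ⟨a, b, r, htight, hperm.nodup_iff.2 ?_, fun x => hperm.mem_iff.2 ?_⟩
  · refine (hX ▸ nodup_toList _).append hnodup fun x hx => ?_
    simpa [hX] using hx
  · simp only [hX, List.mem_append, mem_toList, mem_compl, List.mem_toFinset]
    exact (em _).symm

theorem IsReservoir.exists_tight_hamiltonian_cycle {Z : Finset V} {u : ℝ}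
    (hZ : IsReservoir E Z u) {A : Block V} (hA : A.IsLinkable E) (hAnodup : A.toList.Nodup)
    (hZA : ∀ x ∈ Z, x ∉ A.toList.toFinset) {K : ℕ} {T : Finset (List V)}
    (hT : IsPacking K (A.toList.toFinset ∪ Z) T) (hpath : ∀ l ∈ T, IsLinkablePath E l)
    (hu : 16 * #T ≤ u)
    (habs : ∀ X : List V, X.length ≤ #((A.toList.toFinset ∪ Z)ᶜ \ vertices T) + #Z →
      A.Absorbs E X) :
    ∃ a b r, Tight E (a :: b :: (r ++ [a, b])) ∧ (a :: b :: r).Nodup ∧ ∀ x, x ∈ a :: b :: r := by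
  obtain ⟨Bs, hBsT, hBs⟩ := exists_blocks_of_isLinkablePath fun l hl => hpath l (mem_toList.1 hl)
  have hlen : Bs.length = #T := by simpa using congrArg List.length hBsT
  obtain ⟨Y, C, hC, hY, hYZ, hYlen⟩ := hZ.exists_joined hA ∅ hBs (by simpa [hlen] using hu)
  have hClinkable := hC.isLinkable hA
  obtain ⟨y, hy, hyfresh, hyZ⟩ := hZ C.c C.d C.a C.b hClinkable.2.2 hClinkable.2.1 Y.toFinset
    (le_trans (by exact_mod_cast hlen ▸ hYlen ▸ List.toFinset_card_le Y) hu)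
  have hperm : C.toList.Perm ((T.toList.flatten ++ A.toList) ++ Y) := by
    rw [← hBsT, ← List.flatMap_def]
    exact hC.toList_perm
  have hXcard : #(C.toList ++ y).toFinsetᶜ ≤
      #((A.toList.toFinset ∪ Z)ᶜ \ vertices T) + #Z := by
    refine (card_le_card fun x hx => ?_).trans (card_union_le _ _)
    simp only [mem_compl, List.mem_toFinset, List.mem_append, hperm.mem_iff, mem_flatten_toList,
      mem_union, mem_sdiff] at hx ⊢
    tauto
  have hC_absorbs : C.Absorbs E (C.toList ++ y).toFinsetᶜ.toList :=
    hC.absorbs (X := []) (habs (C.toList ++ y).toFinsetᶜ.toList (by rwa [length_toList])) (by simp)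
  have hTA : (T.toList.flatten).Disjoint A.toList := fun x hxT hxA =>
    hT.notMem_of_mem_vertices (mem_flatten_toList.1 hxT)
      (mem_union_left _ (List.mem_toFinset.2 hxA))
  have hTAZ : ∀ x ∈ T.toList.flatten ++ A.toList, x ∉ Z := fun x hx hxZ =>
    (List.mem_append.1 hx).elim
      (fun hxT => hT.notMem_of_mem_vertices (mem_flatten_toList.1 hxT) (mem_union_right _ hxZ))
      (fun hxA => hZA x hxZ (List.mem_toFinset.2 hxA))
  refine hC_absorbs.exists_tight_hamiltonian_cycle (mem_filter.1 hy).2 ?_ rfl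
  rw [(hperm.append_right y).nodup_iff, List.append_assoc]
  refine (hT.nodup_flatten.append hAnodup hTA).append (hY.1.append hyfresh.1 ?_) ?_
  · exact fun x hxY hxy => hyfresh.2 x hxy (List.mem_toFinset.2 hxY)
  · exact fun x hx hxYy => hTAZ x hx ((List.mem_append.1 hxYy).elim (hYZ x) (hyZ x))

universe w

theorem exists_absorbing_block_isReservoir :
    ∃ α > (0 : ℝ), ∃ β > (0 : ℝ), ∃ N : ℕ,
      ∀ (V : Type w) [Fintype V] (E : V → V → V → Prop), IsDense E → N ≤ Fintype.card V →
        ∃ (A : Block V) (Z : Finset V),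
        A.IsLinkable E ∧ A.toList.Nodup ∧ (∀ x ∈ Z, x ∉ A.toList.toFinset) ∧
        #(A.toList.toFinset ∪ Z) ≤ 0.001 * (Fintype.card V : ℝ) ∧
        (∀ X : List V, X.length ≤ α * Fintype.card V + #Z → A.Absorbs E X) ∧
        IsReservoir E Z (β * Fintype.card V) := by
  have hk := absorberDensity_pos
  have hκ := linkDensity_pos
  set μ := absorberDensity / 100000 with hμ
  set c := absorberDensity * μ / 8 with hc
  have hμpos : 0 < μ := by positivity
  have hcpos : 0 < c := by positivity
  obtain ⟨N₁, hN₁⟩ := exists_absorbing_block.{w} hμpos (by linarith)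
  obtain ⟨N₂, hN₂⟩ := exists_isReservoir.{w} (μ := c / 100) (by positivity)
  refine ⟨c / 2, by positivity, linkDensity * (c / 100) / 16, by positivity,
    max (max N₁ N₂) ⌈100000 / c⌉₊, fun V _ E h hV => ?_⟩
  simp only [max_le_iff, Nat.ceil_le, div_le_iff₀' hcpos] at hV
  obtain ⟨⟨hV₁, hV₂⟩, hcn⟩ := hV
  have hn : (0 : ℝ) ≤ Fintype.card V := Nat.cast_nonneg' _
  have hκn := mul_le_of_le_one_left hn linkDensity_le_one
  have hμn : 100000 * (μ * Fintype.card V) ≤ linkDensity * Fintype.card V := by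
    rw [← mul_assoc]
    gcongr
    linarith [absorberDensity_le_linkDensity]
  have hcμ : c * Fintype.card V ≤ μ * Fintype.card V := by
    gcongr
    nlinarith [absorberDensity_le_linkDensity, linkDensity_le_one]
  obtain ⟨A, hA, hAnodup, hAlen, hAabs⟩ := hN₁ V E h hV₁
  have hAcard : (#A.toList.toFinset : ℝ) ≤ A.toList.length := mod_cast List.toFinset_card_le _
  obtain ⟨Z, hZcard, hZA, hZ⟩ := hN₂ V E h hV₂ A.toList.toFinset (by linarith)
  have hAZcard : (#(A.toList.toFinset ∪ Z) : ℝ) ≤ #A.toList.toFinset + #Z :=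
    mod_cast card_union_le _ _
  exact ⟨A, Z, hA, hAnodup, hZA, by linarith, fun X hX => hAabs X (by rw [← hc]; linarith), hZ⟩

theorem exists_tight_hamiltonian_cycle :
    ∃ N : ℕ, ∀ (V : Type w) [Fintype V] (E : V → V → V → Prop), IsDense E →
      N ≤ Fintype.card V →
      ∃ a b r, Tight E (a :: b :: (r ++ [a, b])) ∧ (a :: b :: r).Nodup ∧
        ∀ x, x ∈ a :: b :: r := by
  obtain ⟨α, hα, β, hβ, N, hN⟩ := exists_absorbing_block_isReservoir.{w}
  set m := ⌈16 / β⌉₊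
  have hm : 16 / β ≤ (3 * (m + 1) + 1 : ℕ) :=
    (Nat.le_ceil _).trans (Nat.cast_le.2 (by lia))
  obtain ⟨N', hN'⟩ := exists_isPacking_isLinkablePath.{w} m hα
  refine ⟨max N N', fun V _ E h hV => ?_⟩
  obtain ⟨A, Z, hA, hAnodup, hZA, hAZ, hAabs, hZ⟩ := hN V E h ((le_max_left _ _).trans hV)
  obtain ⟨T, hT, hpath, hleft⟩ := hN' V E h ((le_max_right _ _).trans hV) _ hAZ
  have hTcard : 16 * #T ≤ β * Fintype.card V := by
    rw [← div_le_iff₀' hβ, ← div_mul_eq_mul_div]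
    exact (mul_le_mul_of_nonneg_right hm (Nat.cast_nonneg' _)).trans (mod_cast hT.mul_card_le)
  refine hZ.exists_tight_hamiltonian_cycle hA hAnodup hZA hT hpath hTcard fun X hX => hAabs X ?_
  rify at hX
  linarith

end HamiltonCycle

end

section Orderings

variable {α : Type*}

theorem Tight.edge_of_getElem? {E : α → α → α → Prop} {l : List α} (hl : Tight E l) {i : ℕ}
    {x y z : α} (hx : l[i]? = some x) (hy : l[i + 1]? = some y) (hz : l[i + 2]? = some z) :
    E x y z := by
  induction l generalizing i with
  | nil => simp at hx
  | cons w l ih =>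
    cases i with
    | succ i => exact ih hl.tail hx hy hz
    | zero =>
      match l, hl, hx, hy, hz with
      | _ :: _ :: _, hl, rfl, rfl, rfl => exact hl.1

theorem getElem?_append_two {a b : α} {r : List α} {n k : ℕ} (hn : (a :: b :: r).length = n)
    (hk : k < n + 2) : (a :: b :: (r ++ [a, b]))[k]? = (a :: b :: r)[k % n]? := by
  obtain hlt | hge := lt_or_ge k n
  · rw [Nat.mod_eq_of_lt hlt]
    exact List.getElem?_append_left (hn ▸ hlt)
  · obtain ⟨j, rfl⟩ := Nat.exists_eq_add_of_le hge
    have hj : j < 2 := by lia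
    have hjn : j < n := hj.trans_le (hn ▸ Nat.le_add_left 2 r.length)
    rw [Nat.add_mod_left, Nat.mod_eq_of_lt hjn]
    refine (List.getElem?_append_right (l₁ := a :: b :: r) (hn.trans_le hge)).trans ?_
    rw [hn, Nat.add_sub_cancel_left]
    interval_cases j <;> rfl

theorem hasTightHamCycle_of_tight {n : ℕ} (hn : 3 ≤ n) {H : Finset (Finset (Fin n))} {a b : Fin n}
    {r : List (Fin n)} (htight : Tight (fun a b c => {a, b, c} ∈ H) (a :: b :: (r ++ [a, b])))
    (hnodup : (a :: b :: r).Nodup) (hmem : ∀ x, x ∈ a :: b :: r) : HasTightHamCycle n H := by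
  have hlen : (a :: b :: r).length = n := by
    rw [← List.toFinset_card_of_nodup hnodup,
      eq_univ_iff_forall.2 fun x => List.mem_toFinset.2 (hmem x), card_fin]
  have : NeZero n := ⟨by lia⟩
  have hval : ∀ i : ZMod n, i.val < (a :: b :: r).length := fun i =>
    (ZMod.val_lt i).trans_eq hlen.symm
  set f : ZMod n → Fin n := fun i => (a :: b :: r)[i.val]'(hval i)
  have hf : ∀ (i : ZMod n) (j : ℕ), j ≤ 2 →
      (a :: b :: (r ++ [a, b]))[i.val + j]? = some (f (i + j)) := by
    intro i j hj
    have hi := ZMod.val_lt i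
    rw [getElem?_append_two hlen (by lia), ← ZMod.val_cast_of_lt (by lia : j < n), ← ZMod.val_add,
      ZMod.val_cast_of_lt (by lia : j < n)]
    exact List.getElem?_eq_getElem (hval _)
  refine ⟨f, (Fintype.bijective_iff_injective_and_card f).2 ⟨fun i j hij => ?_, by simp⟩,
    fun i => ?_⟩
  · exact ZMod.val_injective n (hnodup.getElem_inj_iff.1 hij)
  · exact htight.edge_of_getElem? (by simpa using hf i 0 (by lia)) (by simpa using hf i 1 (by lia))
      (by simpa using hf i 2 le_rfl)

end Orderings

section Degrees

variable {α : Type*} [DecidableEq α] {H : Finset (Finset α)}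

theorem isThreeGraph_of_card_eq_three (hH : ∀ e ∈ H, #e = 3) :
    IsThreeGraph fun a b c => {a, b, c} ∈ H where
  swap_left := by
    intro a b c h
    rwa [insert_comm] at h
  swap_right := by
    intro a b c h
    rwa [pair_comm] at h
  ne := by
    rintro a b c h rfl
    have hcard := hH _ h
    rw [insert_eq_of_mem (mem_insert_self a {c})] at hcard
    exact absurd hcard (card_le_two.trans_lt (by norm_num)).ne

variable [Fintype α]

theorem two_mul_card_filter_mem_le (hH : ∀ e ∈ H, #e = 3) (v : α) :
    2 * #{e ∈ H | v ∈ e} ≤ #{p : α × α | {v, p.1, p.2} ∈ H} := by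
  rw [card_eq_sum_card_fiberwise (f := fun p : α × α => ({v, p.1, p.2} : Finset α))
    (t := {e ∈ H | v ∈ e}) (fun p hp => by simpa using hp), mul_comm, ← smul_eq_mul]
  refine card_nsmul_le_sum _ _ _ fun e he => ?_
  obtain ⟨heH, hve⟩ := mem_filter.1 he
  obtain ⟨x, y, hxy, hxye⟩ := card_eq_two.1 ((card_erase_of_mem hve).trans (by rw [hH e heH]))
  have hvxy : ({v, x, y} : Finset α) = e := by rw [← hxye, insert_erase hve]
  have hvyx : ({v, y, x} : Finset α) = e := by rw [pair_comm, hvxy]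
  rw [← card_pair (show (x, y) ≠ (y, x) from fun h => hxy (Prod.ext_iff.1 h).1)]
  refine card_le_card fun p hp => ?_
  rcases mem_insert.1 hp with rfl | hp
  · simp [hvxy, heH]
  · obtain rfl := mem_singleton.1 hp
    simp [hvyx, heH]

theorem isDense_of_degree (hH : ∀ e ∈ H, #e = 3) (hcard : 100000 ≤ Fintype.card α)
    (hdeg : ∀ v, 0.79995 * ((Fintype.card α - 1).choose 2 : ℝ) ≤ #{e ∈ H | v ∈ e}) :
    IsDense fun a b c => {a, b, c} ∈ H := by
  refine ⟨isThreeGraph_of_card_eq_three hH, fun v => ?_⟩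
  have hpairs : (2 : ℝ) * #{e ∈ H | v ∈ e} ≤ #{p : α × α | {v, p.1, p.2} ∈ H} :=
    mod_cast two_mul_card_filter_mem_le hH v
  have hv := hdeg v
  rw [Nat.cast_choose_two, Nat.cast_sub (by lia), Nat.cast_one] at hv
  have hn : (100000 : ℝ) ≤ Fintype.card α := mod_cast hcard
  have hgoal : 0.7999 * (Fintype.card α : ℝ) ^ 2 ≤ #{p : α × α | {v, p.1, p.2} ∈ H} := by
    nlinarith
  convert hgoal

end Degrees

end TightCycle

theorem stmt_0_general :
    ∃ n₀ : ℕ, ∀ n : ℕ, n₀ ≤ n → ∀ H : Finset (Finset (Fin n)),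
      (∀ e ∈ H, e.card = 3) →
      (∀ v : Fin n,
        (0.79995 : ℝ) * ((n - 1).choose 2 : ℝ) ≤ ((H.filter fun e => v ∈ e).card : ℝ)) →
      HasTightHamCycle n H := by
  obtain ⟨N, hN⟩ := TightCycle.exists_tight_hamiltonian_cycle
  refine ⟨max N 100000, fun n hn H hH hdeg => ?_⟩
  obtain ⟨hnN, hn⟩ := max_le_iff.1 hn
  have hdense := TightCycle.isDense_of_degree hH (by simpa using hn) (by simpa using hdeg)
  obtain ⟨a, b, r, htight, hnodup, hmem⟩ := hN (Fin n) _ hdense (by simpa using hnN)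
  exact TightCycle.hasTightHamCycle_of_tight (by lia) htight hnodup hmem

/-- There exists `n₀` such that every 3-graph on `n ≥ n₀` vertices with minimum vertex
degree at least `0.8·C(n-1,2)` contains a tight Hamiltonian cycle. -/
theorem stmt_0 :
    ∃ n₀ : ℕ, ∀ n : ℕ, n₀ ≤ n → ∀ H : Finset (Finset (Fin n)),
      (∀ e ∈ H, e.card = 3) →
      (∀ v : Fin n,
        (0.8 : ℝ) * ((n - 1).choose 2 : ℝ) ≤ ((H.filter fun e => v ∈ e).card : ℝ)) →
      HasTightHamCycle n H := by
  obtain ⟨n₀, h⟩ := stmt_0_general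
  exact ⟨n₀, fun n hn H hH hdeg => h n hn H hH fun v =>
    (by gcongr; norm_num : _ ≤ 0.8 * ((n - 1).choose 2 : ℝ)).trans (hdeg v)⟩
end

section
/- Every (simple) graph G with n vertices and m edges contains at least (m/(3n))·(4m − n²) triangles. In particular, if m ≥ ρ·n²/2 for some ρ > 0, then the number of triangles in G is at least ρ(2ρ−1)·n³/6. -/
open Finset

/-!
Two vertices `u`, `v` have at least `d(u) + d(v) - n` common neighbours. Sum this over all `2m`
ordered edges `(u, v)`: the common neighbours count every triangle `6` times, and the degrees
add up to `2 ∑ d(v)²`, so `∑ d(v)² ≤ mn + 3T`, where `T` is the number of triangles. By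
Cauchy–Schwarz `n ∑ d(v)² ≥ (2m)²`, whence `m(4m - n²) ≤ 3nT`.
-/

section TriangleCount

variable {V : Type*} [Fintype V] (G : SimpleGraph V) [DecidableRel G.Adj]

lemma sum_dart_fst {M : Type*} [AddCommMonoid M] (f : V → M) :
    ∑ d : G.Dart, f d.fst = ∑ v, G.degree v • f v := by
  classical
  simp_rw [← sum_fiberwise univ (fun d : G.Dart ↦ d.fst) (fun d ↦ f d.fst),
    ← G.dart_fst_fiber_card_eq_degree]
  exact sum_congr rfl fun v _ ↦ sum_eq_card_nsmul fun d hd ↦ congrArg f (mem_filter.mp hd).2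

lemma sum_dart_snd {M : Type*} [AddCommMonoid M] (f : V → M) :
    ∑ d : G.Dart, f d.snd = ∑ v, G.degree v • f v := by
  rw [← sum_dart_fst]
  exact Fintype.sum_equiv SimpleGraph.Dart.symm_involutive.toPerm _ _ fun _ ↦ rfl

lemma sq_two_mul_card_edges_le_card_mul_sum_degree_sq :
    (2 * #G.edgeFinset) ^ 2 ≤ Fintype.card V * ∑ v, G.degree v ^ 2 := by
  rw [← G.sum_degrees_eq_twice_card_edges, ← card_univ]
  exact sq_sum_le_card_mul_sum_sq

variable [DecidableEq V]

lemma degree_add_degree_le_card_add_card_inter_neighborFinset (u v : V) :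
    G.degree u + G.degree v ≤ Fintype.card V + #(G.neighborFinset u ∩ G.neighborFinset v) := by
  rw [← G.card_neighborFinset_eq_degree, ← G.card_neighborFinset_eq_degree,
    ← card_union_add_card_inter]
  gcongr
  exact card_le_univ _

variable {G}

lemma card_inter_neighborFinset_eq_card_triangles_of_adj {u v : V} (huv : G.Adj u v) :
    #(G.neighborFinset u ∩ G.neighborFinset v) = #{t ∈ G.cliqueFinset 3 | u ∈ t ∧ v ∈ t} := by
  refine card_bij (fun w _ ↦ {u, v, w}) ?maps_to ?injective ?surjective
  case maps_to =>
    intro w hw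
    simp only [mem_inter, SimpleGraph.mem_neighborFinset] at hw
    simp [SimpleGraph.is3Clique_triple_iff, huv, hw]
  case injective =>
    intro w hw w' _ h
    simp only [mem_inter, SimpleGraph.mem_neighborFinset] at hw
    have hw' : w ∈ ({u, v, w'} : Finset V) := h ▸ by simp
    simpa [hw.1.ne', hw.2.ne'] using hw'
  case surjective =>
    intro t ht
    simp only [mem_filter, SimpleGraph.mem_cliqueFinset_iff] at ht
    obtain ⟨ht, hut, hvt⟩ := ht
    have huv_sub : {u, v} ⊆ t := by simp [insert_subset_iff, hut, hvt]
    obtain ⟨w, hw⟩ : ∃ w, t \ {u, v} = {w} := by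
      rw [← card_eq_one, card_sdiff_of_subset huv_sub, ht.card_eq, card_pair huv.ne]
    have ht_eq : {u, v, w} = t := by
      rw [← union_sdiff_of_subset huv_sub, hw, insert_union, singleton_union]
    rw [← ht_eq, SimpleGraph.is3Clique_triple_iff] at ht
    exact ⟨w, by simp [ht], ht_eq⟩

lemma card_darts_of_isClique {s : Finset V} (hs : G.IsClique s) :
    #{d : G.Dart | d.fst ∈ s ∧ d.snd ∈ s} = #s.offDiag := by
  refine card_bij (fun d _ ↦ d.toProd) ?_ (fun _ _ _ _ h ↦ SimpleGraph.Dart.ext _ _ h) ?_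
  · intro d hd
    simpa [and_assoc, d.adj.ne] using hd
  · rintro ⟨u, v⟩ huv
    obtain ⟨hu, hv, hne⟩ := mem_offDiag.mp huv
    exact ⟨⟨(u, v), hs hu hv hne⟩, by simp [hu, hv], rfl⟩

variable (G)

lemma sum_dart_card_inter_neighborFinset :
    ∑ d : G.Dart, #(G.neighborFinset d.fst ∩ G.neighborFinset d.snd) =
      6 * #(G.cliqueFinset 3) := by
  calc ∑ d : G.Dart, #(G.neighborFinset d.fst ∩ G.neighborFinset d.snd)
      = ∑ d : G.Dart, #{t ∈ G.cliqueFinset 3 | d.fst ∈ t ∧ d.snd ∈ t} :=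
        sum_congr rfl fun d _ ↦ card_inter_neighborFinset_eq_card_triangles_of_adj d.adj
    _ = ∑ t ∈ G.cliqueFinset 3, #{d : G.Dart | d.fst ∈ t ∧ d.snd ∈ t} :=
        sum_card_bipartiteAbove_eq_sum_card_bipartiteBelow _
    _ = ∑ t ∈ G.cliqueFinset 3, 6 := by
        refine sum_congr rfl fun t ht ↦ ?_
        rw [SimpleGraph.mem_cliqueFinset_iff] at ht
        rw [card_darts_of_isClique ht.isClique, offDiag_card, ht.card_eq]
    _ = 6 * #(G.cliqueFinset 3) := by rw [sum_const, smul_eq_mul, mul_comm]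

lemma sum_degree_sq_le_card_edges_mul_card_add_card_triangles :
    ∑ v, G.degree v ^ 2 ≤ #G.edgeFinset * Fintype.card V + 3 * #(G.cliqueFinset 3) := by
  have sum_over_darts : 2 * ∑ v, G.degree v ^ 2 ≤
      2 * #G.edgeFinset * Fintype.card V + 6 * #(G.cliqueFinset 3) :=
    calc 2 * ∑ v, G.degree v ^ 2
        = ∑ d : G.Dart, (G.degree d.fst + G.degree d.snd) := by
          rw [sum_add_distrib, sum_dart_fst G (G.degree ·), sum_dart_snd G (G.degree ·), two_mul]
          simp_rw [smul_eq_mul, sq]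
      _ ≤ ∑ d : G.Dart,
            (Fintype.card V + #(G.neighborFinset d.fst ∩ G.neighborFinset d.snd)) :=
          sum_le_sum fun d _ ↦ degree_add_degree_le_card_add_card_inter_neighborFinset G _ _
      _ = 2 * #G.edgeFinset * Fintype.card V + 6 * #(G.cliqueFinset 3) := by
          rw [sum_add_distrib, sum_dart_card_inter_neighborFinset, sum_const, card_univ,
            G.dart_card_eq_twice_card_edges, smul_eq_mul]
  linarith

lemma card_edges_mul_le_card_triangles_mul :
    (#G.edgeFinset : ℝ) * (4 * #G.edgeFinset - (Fintype.card V : ℝ) ^ 2) ≤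
      #(G.cliqueFinset 3) * (3 * Fintype.card V) := by
  have edges_triangles : (2 * #G.edgeFinset) ^ 2 ≤
      Fintype.card V * (#G.edgeFinset * Fintype.card V + 3 * #(G.cliqueFinset 3)) :=
    (sq_two_mul_card_edges_le_card_mul_sum_degree_sq G).trans <|
      Nat.mul_le_mul_left _ (sum_degree_sq_le_card_edges_mul_card_add_card_triangles G)
  have edges_triangles_real : (2 * #G.edgeFinset : ℝ) ^ 2 ≤
      Fintype.card V * (#G.edgeFinset * Fintype.card V + 3 * #(G.cliqueFinset 3)) := by
    exact_mod_cast edges_triangles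
  linarith

lemma card_edges_div_mul_le_card_triangles :
    (#G.edgeFinset : ℝ) / (3 * Fintype.card V) *
      (4 * #G.edgeFinset - (Fintype.card V : ℝ) ^ 2) ≤ #(G.cliqueFinset 3) := by
  rw [div_mul_eq_mul_div]
  exact div_le_of_le_mul₀ (by positivity) (by positivity) (card_edges_mul_le_card_triangles_mul G)

variable {G}

lemma density_mul_card_pow_three_le_card_triangles {ρ : ℝ} (hρ : 0 ≤ ρ)
    (hm : ρ * (Fintype.card V : ℝ) ^ 2 / 2 ≤ #G.edgeFinset) :
    ρ * (2 * ρ - 1) * (Fintype.card V : ℝ) ^ 3 / 6 ≤ #(G.cliqueFinset 3) := by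
  set n : ℝ := (Fintype.card V : ℝ)
  set m : ℝ := (#G.edgeFinset : ℝ)
  have hn : 0 ≤ n := by positivity
  rcases le_total (2 * ρ - 1) 0 with sparse | dense
  · have bound_nonpos : ρ * (2 * ρ - 1) * n ^ 3 ≤ 0 :=
      mul_nonpos_of_nonpos_of_nonneg (mul_nonpos_of_nonneg_of_nonpos hρ sparse) (by positivity)
    exact (div_nonpos_of_nonpos_of_nonneg bound_nonpos (by norm_num)).trans (Nat.cast_nonneg _)
  · calc ρ * (2 * ρ - 1) * n ^ 3 / 6
        = ρ * n ^ 2 / 2 / (3 * n) * ((2 * ρ - 1) * n ^ 2) := by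
          rcases hn.eq_or_lt with n_zero | n_pos
          · simp [← n_zero]
          · field
      _ ≤ m / (3 * n) * (4 * m - n ^ 2) := by
          gcongr
          linarith
      _ ≤ #(G.cliqueFinset 3) := card_edges_div_mul_le_card_triangles G

end TriangleCount

/-- Every graph `G` with `n` vertices and `m` edges contains at least `(m/(3n))·(4m - n²)`
triangles; in particular if `m ≥ ρn²/2` with `ρ > 0` then `G` has at least
`ρ(2ρ-1)n³/6` triangles. -/
theorem stmt_4 {V : Type} [Fintype V] [DecidableEq V]
    (G : SimpleGraph V) [DecidableRel G.Adj] :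
    ((G.edgeFinset.card : ℝ) / (3 * Fintype.card V)) *
        (4 * (G.edgeFinset.card : ℝ) - (Fintype.card V : ℝ) ^ 2) ≤
      ((G.cliqueFinset 3).card : ℝ) ∧
    ∀ ρ : ℝ, 0 < ρ →
      ρ * (Fintype.card V : ℝ) ^ 2 / 2 ≤ (G.edgeFinset.card : ℝ) →
      ρ * (2 * ρ - 1) * (Fintype.card V : ℝ) ^ 3 / 6 ≤ ((G.cliqueFinset 3).card : ℝ) :=
  ⟨card_edges_div_mul_le_card_triangles G, fun _ hρ hm ↦
    density_mul_card_pow_three_le_card_triangles hρ.le hm⟩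
end

section
/- For every d > 0 and every integer h ≥ 1, there exist c > 0 and n_0 such that every 3-graph H on n ≥ n_0 vertices with at least d·n³ edges contains at least c·n^{3h} copies of K_{h,h,h}. -/
open Finset
open scoped Classical

/-- The (ordered) copies of the complete 3-partite 3-graph `K_{h,h,h}` in a 3-graph `H`:
triples `(A,B,C)` of pairwise disjoint `h`-element vertex sets such that every triple
with one vertex in each of `A`, `B`, `C` is an edge of `H`. -/
noncomputable def tripartiteCopies {V : Type} [DecidableEq V] [Fintype V]
    (H : Finset (Finset V)) (h : ℕ) : Finset (Finset V × Finset V × Finset V) :=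
  Finset.univ.filter fun T =>
    T.1.card = h ∧ T.2.1.card = h ∧ T.2.2.card = h ∧
    Disjoint T.1 T.2.1 ∧ Disjoint T.1 T.2.2 ∧ Disjoint T.2.1 T.2.2 ∧
    ∀ a ∈ T.1, ∀ b ∈ T.2.1, ∀ c ∈ T.2.2, ({a, b, c} : Finset V) ∈ H

/-!
By convexity of `t ↦ t ^ n`, replacing one variable of a nonnegative function of three variables
by `n` independent copies of it raises the mean at worst to the `n`-th power. Doing this once in
each variable of the indicator of `{x, y, z} ∈ H` shows that the proportion of maps from the
vertices of `K_{h,h,h}` to `V` which are homomorphisms into `H` is at least `d ^ (h ^ 3)`. Only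
`O(n ^ (3 * h - 1))` maps fail to be injective, so for large `n` at least half of these
homomorphisms are injective. An injective homomorphism spans a copy of `K_{h,h,h}` and each copy
is spanned by at most `h ^ (3 * h)` of them.
-/

open scoped BigOperators

section Mean

variable {X Y Z : Type*} [Fintype X] [Fintype Y] [Fintype Z]

lemma pow_expect_le_expect_pow [Nonempty X] {F : X → ℝ} (hF : ∀ x, 0 ≤ F x) (n : ℕ) :
    (𝔼 x, F x) ^ n ≤ 𝔼 x, F x ^ n := by
  have weights_sum : ∑ _x : X, (Fintype.card X : ℝ)⁻¹ = 1 := by simp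
  simpa only [Fintype.expect_eq_sum_div_card, div_eq_inv_mul, mul_sum] using
    Real.pow_arith_mean_le_arith_mean_pow univ _ F (fun _ _ ↦ by positivity) weights_sum
      (fun x _ ↦ hF x) n

lemma pow_expect_le_expect_prod_last [Nonempty X] [Nonempty Y] {F : X → Y → Z → ℝ}
    (hF : ∀ x y z, 0 ≤ F x y z) (n : ℕ) :
    (𝔼 x, 𝔼 y, 𝔼 z, F x y z) ^ n ≤ 𝔼 w : Fin n → Z, 𝔼 x, 𝔼 y, ∏ l, F x y (w l) := by
  have mean_z_nonneg (x y) : 0 ≤ 𝔼 z, F x y z := expect_nonneg fun z _ ↦ hF x y z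
  calc (𝔼 x, 𝔼 y, 𝔼 z, F x y z) ^ n
      ≤ 𝔼 x, (𝔼 y, 𝔼 z, F x y z) ^ n :=
        pow_expect_le_expect_pow (fun x ↦ expect_nonneg fun y _ ↦ mean_z_nonneg x y) n
    _ ≤ 𝔼 x, 𝔼 y, (𝔼 z, F x y z) ^ n :=
        expect_le_expect fun x _ ↦ pow_expect_le_expect_pow (mean_z_nonneg x) n
    _ = 𝔼 x, 𝔼 y, 𝔼 w : Fin n → Z, ∏ l, F x y (w l) := by
        simp only [expect_pow, Fintype.piFinset_univ]
    _ = 𝔼 w : Fin n → Z, 𝔼 x, 𝔼 y, ∏ l, F x y (w l) :=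
        (expect_congr rfl fun _ _ ↦ expect_comm _ _ _).trans (expect_comm _ _ _)

lemma pow_expect_le_expect_prod_prod_prod [Nonempty X] [Nonempty Y] [Nonempty Z]
    {F : X → Y → Z → ℝ} (hF : ∀ x y z, 0 ≤ F x y z) (a b c : ℕ) :
    (𝔼 x, 𝔼 y, 𝔼 z, F x y z) ^ (a * b * c) ≤
      𝔼 u : Fin a → X, 𝔼 v : Fin b → Y, 𝔼 w : Fin c → Z,
        ∏ i, ∏ j, ∏ l, F (u i) (v j) (w l) := by
  have prod_nonneg_z (w : Fin c → Z) (x y) : 0 ≤ ∏ l, F x y (w l) :=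
    prod_nonneg fun l _ ↦ hF x y (w l)
  have prod_nonneg_yz (v : Fin b → Y) (w : Fin c → Z) (x) : 0 ≤ ∏ j, ∏ l, F x (v j) (w l) :=
    prod_nonneg fun j _ ↦ prod_nonneg_z w x (v j)
  have mean_nonneg : 0 ≤ 𝔼 x, 𝔼 y, 𝔼 z, F x y z :=
    expect_nonneg fun x _ ↦ expect_nonneg fun y _ ↦ expect_nonneg fun z _ ↦ hF x y z
  have mean_nonneg_z : 0 ≤ 𝔼 w : Fin c → Z, 𝔼 x, 𝔼 y, ∏ l, F x y (w l) :=
    expect_nonneg fun w _ ↦ expect_nonneg fun x _ ↦ expect_nonneg fun y _ ↦ prod_nonneg_z w x y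
  have blow_up_z := pow_expect_le_expect_prod_last hF c
  have blow_up_y := pow_expect_le_expect_prod_last prod_nonneg_z b
  have blow_up_x := pow_expect_le_expect_prod_last prod_nonneg_yz a
  calc (𝔼 x, 𝔼 y, 𝔼 z, F x y z) ^ (a * b * c)
      = (((𝔼 x, 𝔼 y, 𝔼 z, F x y z) ^ c) ^ b) ^ a := by
        rw [← pow_mul, ← pow_mul]; congr 1; ring
    _ ≤ ((𝔼 w : Fin c → Z, 𝔼 x, 𝔼 y, ∏ l, F x y (w l)) ^ b) ^ a :=
        pow_le_pow_left₀ (pow_nonneg (pow_nonneg mean_nonneg c) b)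
          (pow_le_pow_left₀ (pow_nonneg mean_nonneg c) blow_up_z b) a
    _ ≤ (𝔼 v : Fin b → Y, 𝔼 w : Fin c → Z, 𝔼 x, ∏ j, ∏ l, F x (v j) (w l)) ^ a :=
        pow_le_pow_left₀ (pow_nonneg mean_nonneg_z b) blow_up_y a
    _ ≤ 𝔼 u : Fin a → X, 𝔼 v : Fin b → Y, 𝔼 w : Fin c → Z,
          ∏ i, ∏ j, ∏ l, F (u i) (v j) (w l) := blow_up_x

end Mean

section NonInjective

variable {α β : Type*} [Fintype α] [Fintype β] [DecidableEq α] [DecidableEq β]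

-- A map with `f i = f j` is determined by its restriction away from `i`, so overwriting its value
-- at `i` loses no information.
lemma card_filter_apply_eq_apply_mul_card_le {i j : α} (hij : i ≠ j) :
    #{f : α → β | f i = f j} * Fintype.card β ≤ Fintype.card β ^ Fintype.card α := by
  rw [← Fintype.card_fun, ← card_univ (α := β), ← card_product]
  refine card_le_card_of_injOn (fun p ↦ Function.update p.1 i p.2) (by simp) ?_
  rintro ⟨f, x⟩ hf ⟨g, y⟩ hg hfg
  simp only [coe_product, Set.mem_prod, mem_coe, mem_filter, mem_univ, true_and, and_true] at hf hg
  have update_eq (k : α) : Function.update f i x k = Function.update g i y k := congrFun hfg k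
  have eq_of_ne {k : α} (hk : k ≠ i) : f k = g k := by simpa [hk] using update_eq k
  have eq_i : f i = g i := by rw [hf, hg, eq_of_ne hij.symm]
  refine Prod.ext (funext fun k ↦ ?_) (by simpa using update_eq i)
  rcases eq_or_ne k i with rfl | hk
  exacts [eq_i, eq_of_ne hk]

lemma card_filter_not_injective_mul_card_le :
    #{f : α → β | ¬ Function.Injective f} * Fintype.card β ≤
      Fintype.card α ^ 2 * Fintype.card β ^ Fintype.card α := by
  have cover : ({f : α → β | ¬ Function.Injective f} : Finset (α → β)) ⊆
      (univ.offDiag : Finset (α × α)).biUnion fun p ↦ {f : α → β | f p.1 = f p.2} := by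
    intro f hf
    obtain ⟨i, j, hfij, hij⟩ := Function.not_injective_iff.1 (mem_filter.1 hf).2
    simp only [mem_biUnion, mem_offDiag, mem_filter, mem_univ, true_and]
    exact ⟨(i, j), hij, hfij⟩
  calc #{f : α → β | ¬ Function.Injective f} * Fintype.card β
      ≤ (∑ p ∈ (univ.offDiag : Finset (α × α)), #{f : α → β | f p.1 = f p.2}) *
          Fintype.card β := by
        gcongr
        exact (card_le_card cover).trans card_biUnion_le
    _ ≤ ∑ _p ∈ (univ.offDiag : Finset (α × α)), Fintype.card β ^ Fintype.card α := by
        rw [sum_mul]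
        exact sum_le_sum fun p hp ↦
          card_filter_apply_eq_apply_mul_card_le (mem_offDiag.1 hp).2.2
    _ ≤ Fintype.card α ^ 2 * Fintype.card β ^ Fintype.card α := by
        rw [sum_const, smul_eq_mul, offDiag_card, card_univ, sq]
        gcongr
        exact Nat.sub_le _ _

lemma card_filter_not_injective_le [Nonempty β] {ε : ℝ}
    (hε : (Fintype.card α : ℝ) ^ 2 ≤ ε * Fintype.card β) :
    (#{f : α → β | ¬ Function.Injective f} : ℝ) ≤
      ε * Fintype.card β ^ Fintype.card α := by
  have card_codomain_pos : (0 : ℝ) < Fintype.card β := by positivity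
  refine le_of_mul_le_mul_right ?_ card_codomain_pos
  calc (#{f : α → β | ¬ Function.Injective f} : ℝ) * Fintype.card β
      ≤ (Fintype.card α : ℝ) ^ 2 * Fintype.card β ^ Fintype.card α := by
        exact_mod_cast card_filter_not_injective_mul_card_le (α := α) (β := β)
    _ ≤ ε * Fintype.card β * Fintype.card β ^ Fintype.card α := by gcongr
    _ = ε * Fintype.card β ^ Fintype.card α * Fintype.card β := by ring

end NonInjective

section Homomorphisms

variable {V : Type*} [DecidableEq V] [Fintype V] {H : Finset (Finset V)}

/-- The homomorphisms from `K_{a,b,c}` to the 3-graph `H`: maps, not necessarily injective, that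
send every edge to an edge. The vertex set of `K_{a,b,c}` is encoded as `Fin a ⊕ Fin b ⊕ Fin c`. -/
def tripartiteHoms (H : Finset (Finset V)) (a b c : ℕ) :
    Finset (Fin a ⊕ Fin b ⊕ Fin c → V) :=
  {φ | ∀ i j l, {φ (.inl i), φ (.inr (.inl j)), φ (.inr (.inr l))} ∈ H}

lemma card_le_card_pow_mul_expect_mem (hH : ∀ e ∈ H, #e = 3) :
    (#H : ℝ) ≤ Fintype.card V ^ 3 *
      𝔼 x : V, 𝔼 y : V, 𝔼 z : V, if {x, y, z} ∈ H then 1 else 0 := by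
  have covered : H ⊆ ({p : V × V × V | {p.1, p.2.1, p.2.2} ∈ H} : Finset (V × V × V)).image
      fun p ↦ {p.1, p.2.1, p.2.2} := by
    intro e he
    obtain ⟨x, y, z, -, -, -, rfl⟩ := card_eq_three.1 (hH e he)
    exact mem_image.2 ⟨(x, y, z), by simpa using he, rfl⟩
  calc (#H : ℝ) ≤ (#{p : V × V × V | {p.1, p.2.1, p.2.2} ∈ H} : ℝ) := by
        exact_mod_cast (card_le_card covered).trans card_image_le
    _ = ∑ x : V, ∑ y : V, ∑ z : V, if {x, y, z} ∈ H then 1 else 0 := by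
        simp only [card_filter, Nat.cast_sum, Nat.cast_ite, Nat.cast_one, Nat.cast_zero,
          Fintype.sum_prod_type]
    _ = _ := by
        simp only [← Fintype.card_mul_expect, ← mul_expect]
        ring

lemma card_tripartiteHoms (a b c : ℕ) :
    (#(tripartiteHoms H a b c) : ℝ) = Fintype.card V ^ (a + b + c) *
      𝔼 u : Fin a → V, 𝔼 v : Fin b → V, 𝔼 w : Fin c → V,
        ∏ i, ∏ j, ∏ l, if {u i, v j, w l} ∈ H then 1 else 0 := by
  let splitParts : (Fin a ⊕ Fin b ⊕ Fin c → V) ≃ (Fin a → V) × (Fin b → V) × (Fin c → V) :=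
    (Equiv.sumArrowEquivProdArrow _ _ _).trans
      ((Equiv.refl _).prodCongr (Equiv.sumArrowEquivProdArrow _ _ _))
  calc (#(tripartiteHoms H a b c) : ℝ)
      = ∑ φ : Fin a ⊕ Fin b ⊕ Fin c → V, ∏ i, ∏ j, ∏ l,
          if {φ (.inl i), φ (.inr (.inl j)), φ (.inr (.inr l))} ∈ H then 1 else 0 := by
        simp only [tripartiteHoms, card_filter, Nat.cast_sum, Nat.cast_ite, Nat.cast_one,
          Nat.cast_zero, Fintype.prod_ite_zero, prod_const_one]
    _ = ∑ p : (Fin a → V) × (Fin b → V) × (Fin c → V), ∏ i, ∏ j, ∏ l,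
          if {p.1 i, p.2.1 j, p.2.2 l} ∈ H then 1 else 0 :=
        Fintype.sum_equiv splitParts _ _ fun _ ↦ rfl
    _ = ∑ u : Fin a → V, ∑ v : Fin b → V, ∑ w : Fin c → V, ∏ i, ∏ j, ∏ l,
          if {u i, v j, w l} ∈ H then 1 else 0 := by
        simp only [Fintype.sum_prod_type]
    _ = _ := by
        simp only [← Fintype.card_mul_expect, ← mul_expect,
          Fintype.card_fun, Fintype.card_fin, Nat.cast_pow]
        ring

lemma pow_mul_card_pow_le_card_tripartiteHoms [Nonempty V] (hH : ∀ e ∈ H, #e = 3) {d : ℝ}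
    (hd : 0 ≤ d) (hcard : d * Fintype.card V ^ 3 ≤ #H) (a b c : ℕ) :
    d ^ (a * b * c) * Fintype.card V ^ (a + b + c) ≤ #(tripartiteHoms H a b c) := by
  have density : d ≤ 𝔼 x : V, 𝔼 y : V, 𝔼 z : V, if {x, y, z} ∈ H then (1 : ℝ) else 0 := by
    have card_pow_pos : (0 : ℝ) < Fintype.card V ^ 3 := by positivity
    refine le_of_mul_le_mul_left ?_ card_pow_pos
    rw [mul_comm]
    exact hcard.trans (card_le_card_pow_mul_expect_mem hH)
  rw [card_tripartiteHoms, mul_comm]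
  gcongr
  exact (pow_le_pow_left₀ hd density _).trans
    (pow_expect_le_expect_prod_prod_prod (fun x y z ↦ by positivity) a b c)

/-- The images under `φ` of the three parts of `K_{a,b,c}`. When `φ` is an injective homomorphism,
this is the copy of `K_{a,b,c}` that it spans. -/
def partImages {a b c : ℕ} (φ : Fin a ⊕ Fin b ⊕ Fin c → V) : Finset V × Finset V × Finset V :=
  (univ.image fun i ↦ φ (.inl i), univ.image fun j ↦ φ (.inr (.inl j)),
    univ.image fun l ↦ φ (.inr (.inr l)))

lemma card_filter_partImages_eq_le (a b c : ℕ) (T : Finset V × Finset V × Finset V) :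
    #{φ : Fin a ⊕ Fin b ⊕ Fin c → V | partImages φ = T} ≤
      #T.1 ^ a * (#T.2.1 ^ b * #T.2.2 ^ c) := by
  have maps_into_parts : ({φ | partImages φ = T} : Finset (Fin a ⊕ Fin b ⊕ Fin c → V)) ⊆
      Fintype.piFinset
        (Sum.elim (fun _ ↦ T.1) (Sum.elim (fun _ ↦ T.2.1) fun _ ↦ T.2.2)) := by
    intro φ hφ
    obtain rfl := (mem_filter.1 hφ).2
    simp [partImages]
  simpa using card_le_card maps_into_parts

end Homomorphisms

section Copies

variable {V : Type} [DecidableEq V] [Fintype V] {H : Finset (Finset V)} {h : ℕ}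

lemma partImages_mem_tripartiteCopies {φ : Fin h ⊕ Fin h ⊕ Fin h → V}
    (hφ : φ ∈ tripartiteHoms H h h h) (hinj : Function.Injective φ) :
    partImages φ ∈ tripartiteCopies H h := by
  have hedge := (mem_filter.1 hφ).2
  simp only [tripartiteCopies, partImages, mem_filter, mem_univ, true_and]
  refine ⟨?_, ?_, ?_, ?_, ?_, ?_, ?_⟩
  · exact (card_image_of_injective _ (hinj.comp Sum.inl_injective)).trans (card_fin h)
  · exact (card_image_of_injective _
      (hinj.comp (Sum.inr_injective.comp Sum.inl_injective))).trans (card_fin h)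
  · exact (card_image_of_injective _
      (hinj.comp (Sum.inr_injective.comp Sum.inr_injective))).trans (card_fin h)
  · simp [disjoint_left, hinj.eq_iff]
  · simp [disjoint_left, hinj.eq_iff]
  · simp [disjoint_left, hinj.eq_iff]
  · simpa using hedge

lemma card_filter_injective_tripartiteHoms_le (H : Finset (Finset V)) (h : ℕ) :
    #{φ ∈ tripartiteHoms H h h h | Function.Injective φ} ≤
      h ^ (3 * h) * #(tripartiteCopies H h) := by
  refine card_le_mul_card_image_of_maps_to (f := partImages) (fun φ hφ ↦ ?_) _ fun T hT ↦ ?_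
  · obtain ⟨hom, inj⟩ := mem_filter.1 hφ
    exact partImages_mem_tripartiteCopies hom inj
  · obtain ⟨card_fst, card_snd, card_trd, -⟩ := (mem_filter.1 hT).2
    calc _ ≤ #{φ : Fin h ⊕ Fin h ⊕ Fin h → V | partImages φ = T} :=
          card_le_card (filter_subset_filter _ (subset_univ _))
      _ ≤ #T.1 ^ h * (#T.2.1 ^ h * #T.2.2 ^ h) := card_filter_partImages_eq_le h h h T
      _ = h ^ (3 * h) := by rw [card_fst, card_snd, card_trd]; ring

lemma card_tripartiteHoms_le_card_tripartiteCopies_add (H : Finset (Finset V)) (h : ℕ) :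
    #(tripartiteHoms H h h h) ≤ h ^ (3 * h) * #(tripartiteCopies H h) +
      #{φ : Fin h ⊕ Fin h ⊕ Fin h → V | ¬ Function.Injective φ} := by
  rw [← card_filter_add_card_filter_not (s := tripartiteHoms H h h h) Function.Injective]
  gcongr
  · exact card_filter_injective_tripartiteHoms_le H h
  · exact subset_univ _

end Copies

/-- For every `d > 0` and integer `h ≥ 1` there exist `c > 0` and `n₀` such that every
3-graph on `n ≥ n₀` vertices with at least `d·n³` edges contains at least `c·n^{3h}`
copies of `K_{h,h,h}`. -/
theorem stmt_5 (d : ℝ) (hd : 0 < d) (h : ℕ) (hh : 1 ≤ h) :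
    ∃ c : ℝ, 0 < c ∧ ∃ n₀ : ℕ, ∀ n : ℕ, n₀ ≤ n →
      ∀ (V : Type) [DecidableEq V] [Fintype V], Fintype.card V = n →
      ∀ H : Finset (Finset V), (∀ e ∈ H, e.card = 3) →
        d * (n : ℝ) ^ 3 ≤ (H.card : ℝ) →
        c * (n : ℝ) ^ (3 * h) ≤ ((tripartiteCopies H h).card : ℝ) := by
  set D := d ^ (h * h * h)
  have D_pos : 0 < D := by positivity
  obtain ⟨n₀, hn₀⟩ := exists_nat_gt ((3 * h : ℝ) ^ 2 / (D / 2))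
  refine ⟨D / 2 / h ^ (3 * h), by positivity, n₀, fun n hn V _ _ hV H hH hcard ↦ ?_⟩
  subst hV
  have n_large : (3 * h : ℝ) ^ 2 / (D / 2) < Fintype.card V := hn₀.trans_le (mod_cast hn)
  have : Nonempty V := Fintype.card_pos_iff.1 (Nat.cast_pos.1 (n_large.trans_le' (by positivity)))
  have many_homs : D * Fintype.card V ^ (3 * h) ≤ #(tripartiteHoms H h h h) := by
    simpa [show 3 * h = h + h + h by ring] using
      pow_mul_card_pow_le_card_tripartiteHoms hH hd.le hcard h h h
  have few_not_injective : (#{φ : Fin h ⊕ Fin h ⊕ Fin h → V | ¬ Function.Injective φ} : ℝ) ≤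
      D / 2 * Fintype.card V ^ (3 * h) := by
    have card_vertices : Fintype.card (Fin h ⊕ Fin h ⊕ Fin h) = 3 * h := by
      simp only [Fintype.card_sum, Fintype.card_fin]; ring
    rw [← card_vertices]
    apply card_filter_not_injective_le
    rw [card_vertices, ← div_le_iff₀' (half_pos D_pos)]
    exact mod_cast n_large.le
  have homs_le : (#(tripartiteHoms H h h h) : ℝ) ≤ h ^ (3 * h) * #(tripartiteCopies H h) +
      #{φ : Fin h ⊕ Fin h ⊕ Fin h → V | ¬ Function.Injective φ} := by
    exact_mod_cast card_tripartiteHoms_le_card_tripartiteCopies_add H h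
  rw [div_mul_eq_mul_div, div_le_iff₀' (by positivity)]
  linarith
end
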